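/- arXiv:1709.02188 — 3 statements merged into one kernel-verified Lean document; each statement's English description precedes it below -/
import Mathlib

section
/- Let φ : ℂ → ℂ be holomorphic and injective on the right half-plane ℍ = {z ∈ ℂ : Re z > 0}. Then for every real x > 1 and every y ∈ ℝ one has 1/(8x) ≤ |φ′(1 + iy)| / |φ′(x + iy)| ≤ 2x³; equivalently, |φ′(x + iy)|/(8x) ≤ |φ′(1 + iy)| ≤ 2x³·|φ′(x + iy)|. -/
open Complex

section helpers
open MeasureTheory Metric Set Filter Topology

noncomputable def Lab (a b : ℂ) : ℂ →L[ℝ] ℂ :=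
  (ContinuousLinearMap.mul ℝ ℂ a) + (ContinuousLinearMap.mul ℝ ℂ b).comp (conjCLE : ℂ →L[ℝ] ℂ)

lemma Lab_apply (a b v : ℂ) : Lab a b v = a * v + b * (starRingEnd ℂ) v := by
  simp [Lab]

lemma Lab_det (a b : ℂ) : (Lab a b).det = ‖a‖^2 - ‖b‖^2 := by
  have : (Lab a b).det = LinearMap.det (Lab a b : ℂ →ₗ[ℝ] ℂ) := rfl
  rw [this, ← LinearMap.det_toMatrix basisOneI, Matrix.det_fin_two]
  simp only [LinearMap.toMatrix_apply, ContinuousLinearMap.coe_coe, Lab_apply, Complex.sq_norm, normSq_apply]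
  simp
  ring

lemma mean_ineq (p : ℂ → ℂ) (hp : DifferentiableOn ℂ p (ball 0 1)) (s : ℝ) (h0 : 0 < s) (h1 : s < 1) :
    1 / s^4 + ‖p 0‖^2 ≤ Real.circleAverage (fun z => ‖-1/z^2 + p z‖^2) 0 s := by
  have hsub : closedBall (0:ℂ) s ⊆ ball 0 1 := closedBall_subset_ball h1
  have hcont : ContinuousOn p (sphere 0 |s|) :=
    hp.continuousOn.mono ((sphere_subset_closedBall).trans (by rwa [abs_of_pos h0]))
  have hne : ∀ z ∈ sphere (0:ℂ) |s|, z ≠ 0 := by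
    intro z hz h
    simp [h, abs_of_pos h0] at hz
    exact h0.ne hz
  have hint1 : CircleIntegrable (fun z => ‖-1/z^2 + p z‖^2) 0 s := by
    apply ContinuousOn.circleIntegrable'
    have : ContinuousOn (fun z:ℂ => -1/z^2) (sphere 0 |s|) :=
      continuousOn_const.div (by fun_prop) (fun z hz => pow_ne_zero _ (hne z hz))
    exact (this.add hcont).norm.pow 2
  let b := p 0
  let c : ℂ := (starRingEnd ℂ) b
  let K : ℂ → ℂ := fun z => (1 / s^4 - ‖b‖^2 : ℝ) + 2 * (-(z^2 / (s:ℂ)^4) + c) * p z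
  have hKd : DifferentiableOn ℂ K (closedBall 0 s) := by
    have := hp.mono hsub
    fun_prop
  have hK : Real.circleAverage K 0 s = K 0 := by
    apply DiffContOnCl.circleAverage
    rw [abs_of_pos h0]
    apply DifferentiableOn.diffContOnCl
    rwa [closure_ball _ h0.ne']
  have hKint : CircleIntegrable K 0 s := by
    apply ContinuousOn.circleIntegrable'
    apply hKd.continuousOn.mono
    rw [abs_of_pos h0]; exact sphere_subset_closedBall
  have hK0 : (K 0).re = 1 / s^4 + ‖p 0‖^2 := by
    have : K 0 = ((1 / s^4 - ‖b‖^2 : ℝ) : ℂ) + 2 * (c * b) := by simp [K, b]; ring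
    rw [this, mul_comm c b, mul_conj, Complex.normSq_eq_norm_sq]
    have : (2 : ℂ) * ((‖b‖^2 : ℝ) : ℂ) = ((2 * ‖b‖^2 : ℝ):ℂ) := by push_cast; ring
    rw [this, add_re, ofReal_re, ofReal_re]; simp only [b]; ring
  have hre : Real.circleAverage (fun z => (K z).re) 0 s = (Real.circleAverage K 0 s).re := by
    rw [Real.circleAverage_def, Real.circleAverage_def]
    rw [Complex.real_smul, re_ofReal_mul, smul_eq_mul]
    congr 1
    exact (reCLM.intervalIntegral_comp_comm hKint)
  rw [← hK0, ← hK, ← hre]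
  apply Real.circleAverage_mono _ hint1
  · intro z hz
    have hz0 := hne z hz
    have hzs : ‖z‖ = s := by simpa [abs_of_pos h0] using hz
    have hv : 1 / z^2 = (starRingEnd ℂ) (z^2 / (s:ℂ)^4) := by
      have : z * (starRingEnd ℂ) z = (s:ℂ)^2 := by
        rw [mul_conj, Complex.normSq_eq_norm_sq, hzs]; push_cast; rfl
      have hs : (s:ℂ) ≠ 0 := by exact_mod_cast h0.ne'
      rw [map_div₀, map_pow, map_pow, conj_ofReal]
      field_simp
      rw [show (s:ℂ)^4 = (s^2)^2 by ring, ← this]; ring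
    have hn : ‖z^2 / (s:ℂ)^4‖^2 = 1/s^4 := by
      rw [norm_div, norm_pow, norm_pow, hzs, norm_real, Real.norm_of_nonneg h0.le]
      field_simp
    simp only [K, c]
    rw [neg_div, hv, ← hn]
    generalize z^2 / (s:ℂ)^4 = u
    have key := sq_nonneg ‖p z - b‖
    generalize p z = P at *
    generalize b = B at *
    rw [Complex.sq_norm, normSq_apply] at key
    simp only [Complex.sq_norm, normSq_apply]
    simp at key ⊢
    nlinarith [key]
  · exact ⟨(reCLM.integrable_comp hKint.1), (reCLM.integrable_comp hKint.2)⟩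

lemma circle_lint (p : ℂ → ℂ) (hp : DifferentiableOn ℂ p (ball 0 1)) (s : ℝ) (h0 : 0 < s) (h1 : s < 1) :
    ENNReal.ofReal (2 * Real.pi * (1 / s^4 + ‖p 0‖^2)) ≤
     ∫⁻ θ in Ioo (-Real.pi) Real.pi, ENNReal.ofReal (‖-1/(Complex.polarCoord.symm (s,θ))^2 +
        p (Complex.polarCoord.symm (s,θ))‖^2) := by
  have h := mean_ineq p hp s h0 h1
  set G : ℂ → ℝ := fun z => ‖-1/z^2 + p z‖^2 with hG
  have hpc : ∀ θ : ℝ, Complex.polarCoord.symm (s,θ) = circleMap 0 s θ := by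
    intro θ
    simp [circleMap, Complex.exp_mul_I]
  have hcont : Continuous (fun θ => G (circleMap 0 s θ)) := by
    have hne : ∀ θ, circleMap 0 s θ ≠ 0 := fun θ => circleMap_ne_center h0.ne'
    have hpcont : Continuous (fun θ => p (circleMap 0 s θ)) := by
      apply hp.continuousOn.comp_continuous (continuous_circleMap 0 s)
      intro θ
      simp [abs_of_pos h0, h1]
    have h2 : Continuous (fun θ => -1 / (circleMap 0 s θ)^2) :=
      continuous_const.div ((continuous_circleMap 0 s).pow 2) (fun θ => pow_ne_zero _ (hne θ))
    exact (h2.add hpcont).norm.pow 2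
  have e1 : Real.circleAverage G 0 s = (2*Real.pi)⁻¹ * ∫ θ in (-Real.pi)..Real.pi, G (circleMap 0 s θ) := by
    rw [Real.circleAverage_eq_integral_add (-Real.pi), smul_eq_mul]
    congr 1
    rw [intervalIntegral.integral_comp_add_right (fun θ => G (circleMap 0 s θ))]
    congr 1 <;> ring
  rw [e1] at h
  have hpi := Real.pi_pos
  have e2 : 2 * Real.pi * (1 / s^4 + ‖p 0‖^2) ≤ ∫ θ in (-Real.pi)..Real.pi, G (circleMap 0 s θ) := by
    rw [inv_mul_eq_div, le_div_iff₀ (by positivity)] at h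
    linarith
  refine (ENNReal.ofReal_le_ofReal e2).trans ?_
  rw [intervalIntegral.integral_of_le (by linarith), integral_Ioc_eq_integral_Ioo,
    ofReal_integral_eq_lintegral_ofReal]
  · simp only [hpc]; exact le_rfl
  · exact (hcont.integrableOn_Icc).mono_set Ioo_subset_Icc_self
  · exact Eventually.of_forall fun θ => by simp only [hG]; positivity

lemma annulus_lower (p : ℂ → ℂ) (hp : DifferentiableOn ℂ p (ball 0 1)) (hm : Measurable p)
    (ρ r : ℝ) (h0 : 0 < ρ) (hr : ρ < r) (h1 : r < 1) :
    ENNReal.ofReal (Real.pi * (1/ρ^2 - 1/r^2 + ‖p 0‖^2 * (r^2 - ρ^2))) ≤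
    ∫⁻ z in {z : ℂ | ρ < ‖z‖ ∧ ‖z‖ < r}, ENNReal.ofReal (‖-1/z^2 + p z‖^2) := by
  set A := {z : ℂ | ρ < ‖z‖ ∧ ‖z‖ < r} with hA
  have hAm : MeasurableSet A :=
    ((isOpen_lt continuous_const continuous_norm).inter (isOpen_lt continuous_norm continuous_const)).measurableSet
  set F : ℂ → ENNReal := fun z => ENNReal.ofReal (‖-1/z^2 + p z‖^2) with hF
  have hFm : Measurable F := by
    apply ENNReal.measurable_ofReal.comp
    have : Measurable (fun z : ℂ => -1/z^2) := by fun_prop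
    exact ((this.add hm).norm.pow_const 2)
  rw [← lintegral_indicator hAm, ← Complex.lintegral_comp_polarCoord_symm]
  have hpm : Measurable (fun q : ℝ × ℝ => Complex.polarCoord.symm q) := by
    simp only [Complex.polarCoord_symm_apply]
    fun_prop
  have hmeas : Measurable (fun q : ℝ × ℝ => ENNReal.ofReal q.1 • A.indicator F (Complex.polarCoord.symm q)) := by
    exact (ENNReal.measurable_ofReal.comp measurable_fst).smul ((hFm.indicator hAm).comp hpm)
  have htarget : polarCoord.target = Ioi (0 : ℝ) ×ˢ Ioo (-Real.pi) Real.pi := rfl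
  rw [htarget, Measure.volume_eq_prod, setLIntegral_prod _ hmeas.aemeasurable]
  have hsub : Ioo ρ r ⊆ Ioi (0:ℝ) := fun s hs => h0.trans hs.1
  refine le_trans ?_ (lintegral_mono_set hsub)
  have step : ∀ s ∈ Ioo ρ r, ENNReal.ofReal (2 * Real.pi * (1/s^3 + ‖p 0‖^2 * s)) ≤
      ∫⁻ θ in Ioo (-Real.pi) Real.pi, ENNReal.ofReal s • A.indicator F (Complex.polarCoord.symm (s,θ)) := by
    intro s hs
    have hs0 : 0 < s := hsub hs
    have hin : ∀ θ : ℝ, A.indicator F (Complex.polarCoord.symm (s,θ)) = F (Complex.polarCoord.symm (s,θ)) := by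
      intro θ
      apply indicator_of_mem
      rw [hA, mem_ofPred_eq, Complex.norm_polarCoord_symm, abs_of_pos hs0]
      exact hs
    simp only [hin, smul_eq_mul]
    rw [lintegral_const_mul]
    swap
    · exact hFm.comp (hpm.comp (by fun_prop))
    have := circle_lint p hp s hs0 (hs.2.trans h1)
    calc _ = ENNReal.ofReal s * ENNReal.ofReal (2 * Real.pi * (1 / s^4 + ‖p 0‖^2)) := by
            rw [← ENNReal.ofReal_mul hs0.le]; congr 1; field_simp
      _ ≤ _ := by gcongr
  refine le_trans ?_ (setLIntegral_mono' measurableSet_Ioo step)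
  have hc : ContinuousOn (fun s : ℝ => 2 * Real.pi * (1/s^3 + ‖p 0‖^2 * s)) (Icc ρ r) := by
    apply ContinuousOn.mul continuousOn_const
    apply ContinuousOn.add
    · exact continuousOn_const.div (by fun_prop) (fun s hs => pow_ne_zero _ (h0.trans_le hs.1).ne')
    · fun_prop
  rw [← ofReal_integral_eq_lintegral_ofReal]
  · apply ENNReal.ofReal_le_ofReal
    rw [← integral_Ioc_eq_integral_Ioo, ← intervalIntegral.integral_of_le hr.le]
    rw [intervalIntegral.integral_eq_sub_of_hasDerivAt (f := fun s => Real.pi * (-1/s^2 + ‖p 0‖^2 * s^2))]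
    · apply le_of_eq; ring
    · intro s hs
      rw [uIcc_of_le hr.le] at hs
      have hs0 : 0 < s := h0.trans_le hs.1
      have h1 : HasDerivAt (fun s : ℝ => -1/s^2) (2/s^3) s := by
        have := (hasDerivAt_const s (-1:ℝ)).div (hasDerivAt_pow 2 s) (by positivity)
        refine this.congr_deriv ?_
        field_simp; norm_num; ring
      have h2 := (h1.add ((hasDerivAt_pow 2 s).const_mul (‖p 0‖^2))).const_mul Real.pi
      refine h2.congr_deriv ?_
      norm_num; ring
    · apply ContinuousOn.intervalIntegrable
      rwa [uIcc_of_le hr.le]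
  · exact (hc.integrableOn_Icc).mono_set Ioo_subset_Icc_self
  · rw [EventuallyLE, ae_restrict_iff' measurableSet_Ioo]
    refine Eventually.of_forall fun s hs => ?_
    have := hsub hs
    simp only [mem_Ioi] at this
    have := Real.pi_pos
    simp only [Pi.zero_apply]
    positivity

lemma ellipse_bound (q b e z : ℂ) (C ρ r : ℝ) (hq : q = b * z + e) (he : ‖e‖ ≤ C * ‖z‖^2)
    (h0 : 0 < ρ) (hz : ρ < ‖z‖) (hzr : ‖z‖ < r) (hr : r < 1) (hb : 4 * ‖b‖ * ρ ≤ 1) 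
    (hC : 8 * C * ρ ≤ 1) (hC0 : 0 ≤ C) (hρ : ρ < 1):
    ‖(1/z + q) - b * ρ^2 * (starRingEnd ℂ) (1/z+q)‖ ≤ 1/ρ + 8 * C * ρ^2 := by
  set s := ‖z‖ with hs
  have hs0 : 0 < s := h0.trans hz
  have hz0 : z ≠ 0 := by rintro rfl; simp at hs; linarith
  have hzz : z * (starRingEnd ℂ) z = (s:ℂ)^2 := by
    rw [mul_conj, Complex.normSq_eq_norm_sq]; push_cast; rfl
  have hbb : b * (starRingEnd ℂ) b = (‖b‖:ℂ)^2 := by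
    rw [mul_conj, Complex.normSq_eq_norm_sq]; push_cast; rfl
  have hzc : (starRingEnd ℂ) z ≠ 0 := by simpa using hz0
  have hsC : (s:ℂ) ≠ 0 := by exact_mod_cast hs0.ne'
  have key : (1/z + q) - b * ρ^2 * (starRingEnd ℂ) (1/z+q) =
     ((1 - ‖b‖^2*ρ^2*s^2 : ℝ):ℂ) * (1/z) + b * ((1 - ρ^2/s^2 : ℝ) : ℂ) * z
      + (e - b * ρ^2 * (starRingEnd ℂ) e) := by
    have hd : (1:ℂ) - ρ^2/s^2 = 1 - ρ^2 / (z * (starRingEnd ℂ) z) := by rw [hzz]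
    push_cast
    rw [hd, ← hzz, ← hbb, hq]
    simp only [map_add, map_mul, map_div₀, map_one]
    field_simp
    ring
  rw [key]
  have hs1 : s < 1 := hzr.trans hr
  have hB := norm_nonneg b
  set B := ‖b‖
  have hBρ : B * ρ ≤ 1/4 := by linarith
  have n1 : ‖((1 - B^2*ρ^2*s^2 : ℝ):ℂ) * (1/z)‖ ≤ 1/s := by
    rw [norm_mul, norm_real, norm_div, norm_one, ← hs]
    have h1 : B^2*ρ^2*s^2 ≤ 1 := by
      have : (B * ρ * s) ≤ 1 := by nlinarith [mul_nonneg hB h0.le]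
      calc B^2*ρ^2*s^2 = (B*ρ*s)^2 := by ring
        _ ≤ 1 := pow_le_one₀ (by positivity) this
    rw [Real.norm_of_nonneg (by linarith)]
    have : 0 ≤ B^2*ρ^2*s^2 := by positivity
    exact mul_le_of_le_one_left (by positivity) (by linarith)
  have n2 : ‖b * ((1 - ρ^2/s^2 : ℝ) : ℂ) * z‖ = B * (1 - ρ^2/s^2) * s := by
    rw [norm_mul, norm_mul, norm_real, Real.norm_of_nonneg]
    have : ρ^2/s^2 ≤ 1 := by rw [div_le_one (by positivity)]; gcongr
    linarith
  have n3 : ‖e - b * ρ^2 * (starRingEnd ℂ) e‖ ≤ 2 * C * s^2 := by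
    have : ‖b * ρ^2 * (starRingEnd ℂ) e‖ ≤ ‖e‖ := by
      rw [norm_mul, norm_mul, norm_pow, norm_real, RCLike.norm_conj, Real.norm_of_nonneg h0.le]
      apply mul_le_of_le_one_left (norm_nonneg _)
      change B * ρ^2 ≤ 1
      nlinarith
    have := norm_sub_le e (b * ρ^2 * (starRingEnd ℂ) e)
    linarith
  have tri := norm_add₃_le (a := ((1 - B^2*ρ^2*s^2 : ℝ):ℂ) * (1/z)) (b := b * ((1 - ρ^2/s^2 : ℝ) : ℂ) * z) (c := e - b * ρ^2 * (starRingEnd ℂ) e)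
  refine tri.trans ?_
  rw [n2]
  have m1 : 1/s + B * (1 - ρ^2/s^2) * s ≤ 1/ρ - (s-ρ)/(2*s*ρ) := by
    have : 1/ρ - (s-ρ)/(2*s*ρ) - (1/s + B * (1 - ρ^2/s^2) * s) = (s-ρ)/(s*ρ) * (1/2 - B*ρ*(s+ρ)) := by
      field_simp; ring
    have h2 : 0 ≤ (s-ρ)/(s*ρ) * (1/2 - B*ρ*(s+ρ)) := by
      apply mul_nonneg
      · apply div_nonneg <;> nlinarith
      · nlinarith [mul_nonneg hB h0.le]
    linarith
  have m2 : 2 * C * s^2 ≤ (s-ρ)/(2*s*ρ) + 8 * C * ρ^2 := by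
    rcases le_total s (2*ρ) with h | h
    · have : 0 ≤ (s-ρ)/(2*s*ρ) := div_nonneg (by linarith) (by positivity)
      have : s^2 ≤ (2*ρ)^2 := by gcongr
      nlinarith
    · have : 1/(4*ρ) ≤ (s-ρ)/(2*s*ρ) := by
        rw [div_le_div_iff₀ (by positivity) (by positivity)]; nlinarith
      have h3 : 2 * C ≤ 1/(4*ρ) := by rw [le_div_iff₀ (by positivity)]; linarith
      have : s^2 ≤ 1 := by nlinarith
      have : 0 ≤ 8 * C * ρ^2 := by positivity
      nlinarith
  linarith

lemma area_ineq (q : ℂ → ℂ) (hq : DifferentiableOn ℂ q (ball 0 1))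
    (hinj : InjOn (fun z => 1/z + q z) (ball 0 1 \ {0})) (C ρ r : ℝ)
    (hC : ∀ z, ‖z‖ < r → ‖q z - deriv q 0 * z‖ ≤ C * ‖z‖^2) (hC0 : 0 ≤ C)
    (h0 : 0 < ρ) (hρr : ρ < r) (hr : r < 1) (hb : 4 * ‖deriv q 0‖ * ρ ≤ 1) 
    (hCρ : 8 * C * ρ ≤ 1) :
    (1 - ‖deriv q 0‖^2*ρ^4) * (1/ρ^2 - 1/r^2 + ‖deriv q 0‖^2 * (r^2 - ρ^2)) ≤ (1/ρ + 8 * C * ρ^2)^2 := by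
  set b := deriv q 0 with hbdef
  set A := {z : ℂ | ρ < ‖z‖ ∧ ‖z‖ < r} with hA
  have hAm : MeasurableSet A :=
    ((isOpen_lt continuous_const continuous_norm).inter (isOpen_lt continuous_norm continuous_const)).measurableSet
  have hA1 : A ⊆ ball 0 1 \ {0} := by
    rintro z ⟨h1, h2⟩
    refine ⟨by simp; linarith, ?_⟩
    rintro rfl
    simp at h1; linarith
  have hlow := annulus_lower (deriv q) (hq.deriv isOpen_ball) (measurable_deriv q) ρ r h0 hρr hr
  set g : ℂ → ℂ := fun z => 1/z + q z with hg
  have hgd : ∀ z ∈ A, HasDerivAt g (-1/z^2 + deriv q z) z := by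
    intro z hz
    have hz' := hA1 hz
    have h1 : HasDerivAt q (deriv q z) z :=
      (hq.differentiableAt (isOpen_ball.mem_nhds hz'.1)).hasDerivAt
    have h2 : HasDerivAt (fun z : ℂ => 1/z) (-1/z^2) z := by
      have := hasDerivAt_inv hz'.2
      simp only [one_div]
      exact this.congr_deriv (by rw [neg_div, one_div])
    exact h2.add h1
  have hfd : ∀ z ∈ A, HasFDerivWithinAt g (Lab (-1/z^2 + deriv q z) 0) A z := by
    intro z hz
    have := ((hgd z hz).hasFDerivAt.restrictScalars ℝ).hasFDerivWithinAt (s := A)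
    refine this.congr_fderiv ?_
    refine ContinuousLinearMap.ext fun v => ?_
    simp [Lab_apply, mul_comm]
  have hcov := lintegral_abs_det_fderiv_eq_addHaar_image volume hAm hfd (hinj.mono hA1)
  have e1 : ∀ z : ℂ, |(Lab (-1/z^2 + deriv q z) 0).det| = ‖-1/z^2 + deriv q z‖^2 := by
    intro z; rw [Lab_det]; simp
  simp only [e1] at hcov
  rw [hcov] at hlow
  have himg : Lab 1 (-(b*ρ^2)) '' (g '' A) ⊆ closedBall 0 (1/ρ + 8 * C * ρ^2) := by
    rintro _ ⟨_, ⟨z, hz, rfl⟩, rfl⟩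
    rw [mem_closedBall_zero_iff, Lab_apply, one_mul, neg_mul, ← sub_eq_add_neg]
    exact ellipse_bound (q z) b (q z - b * z) z C ρ r (by ring) (hC z hz.2) h0 hz.1 hz.2 hr hb hCρ hC0 (hρr.trans hr)
  have hvol := measure_mono (μ := volume) himg
  rw [Measure.addHaar_image_continuousLinearMap, Complex.volume_closedBall] at hvol
  have hdet : LinearMap.det (Lab 1 (-(b*ρ^2)) : ℂ →ₗ[ℝ] ℂ) = 1 - ‖b‖^2*ρ^4 := by
    have := Lab_det 1 (-(b*ρ^2))
    change LinearMap.det (Lab 1 (-(b*ρ^2)) : ℂ →ₗ[ℝ] ℂ) = _ at this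
    rw [this, norm_neg, norm_mul, norm_pow, norm_real, Real.norm_of_nonneg h0.le, norm_one]
    ring
  have hdet0 : 0 ≤ 1 - ‖b‖^2*ρ^4 := by
    have hB := norm_nonneg b
    have h1 : ‖b‖ * ρ^2 ≤ 1 := by nlinarith [mul_nonneg hB h0.le]
    have : (‖b‖ * ρ^2)^2 ≤ 1 := pow_le_one₀ (by positivity) h1
    nlinarith
  rw [hdet, abs_of_nonneg hdet0] at hvol
  have h3 := (mul_le_mul_right hlow (ENNReal.ofReal (1 - ‖b‖^2*ρ^4))).trans hvol
  have hR : 0 ≤ 1/ρ + 8 * C * ρ^2 := by positivity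
  have hpi : (NNReal.pi : ENNReal) = ENNReal.ofReal Real.pi := by
    rw [ENNReal.ofReal, ← NNReal.coe_real_pi, Real.toNNReal_coe]
  rw [← ENNReal.ofReal_mul hdet0, hpi, ← ENNReal.ofReal_pow hR, ← ENNReal.ofReal_mul (by positivity),
    ENNReal.ofReal_le_ofReal_iff (by positivity)] at h3
  have := Real.pi_pos
  refine le_of_mul_le_mul_left ?_ this
  linarith

lemma area_thm (q : ℂ → ℂ) (hq : DifferentiableOn ℂ q (ball 0 1)) (hq0 : q 0 = 0)
    (hinj : InjOn (fun z => 1/z + q z) (ball 0 1 \ {0})) : ‖deriv q 0‖ ≤ 1 := by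
  have hnb : ball (0:ℂ) 1 ∈ 𝓝 0 := ball_mem_nhds _ one_pos
  have main : ∀ r : ℝ, 0 < r → r < 1 → ‖deriv q 0‖ * r^2 ≤ 1 := by
    intro r hr0 hr1
    have hd1 : DifferentiableOn ℂ (dslope q 0) (ball 0 1) := (differentiableOn_dslope hnb).2 hq
    have hd2 : DifferentiableOn ℂ (dslope (dslope q 0) 0) (ball 0 1) := (differentiableOn_dslope hnb).2 hd1
    obtain ⟨C, hC⟩ := (isCompact_closedBall (0:ℂ) r).exists_bound_of_continuousOn
      (hd2.continuousOn.mono (closedBall_subset_ball hr1))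
    have hC0 : 0 ≤ C := (norm_nonneg _).trans (hC 0 (by simp [hr0.le]))
    have hC' : ∀ z, ‖z‖ < r → ‖q z - deriv q 0 * z‖ ≤ C * ‖z‖^2 := by
      intro z hz
      have e1 := sub_smul_dslope q 0 z
      have e2 := sub_smul_dslope (dslope q 0) 0 z
      rw [dslope_same] at e2
      simp only [sub_zero, smul_eq_mul, hq0] at e1 e2
      have : q z - deriv q 0 * z = dslope (dslope q 0) 0 z * z^2 := by
        linear_combination -e1 - z * e2
      rw [this, norm_mul, norm_pow]
      gcongr
      exact hC z (by simp [hz.le])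
    set B := ‖deriv q 0‖ with hB
    have hB0 : 0 ≤ B := norm_nonneg _
    have ev : ∀ᶠ ρ in 𝓝[>] (0:ℝ), B^2*r^2 - 1/r^2 ≤ 16*C*ρ + 64*C^2*ρ^4 + B^2*ρ^2 + B^2*ρ^2 + B^4*ρ^4*r^2 := by
      have t1 : ∀ᶠ ρ in 𝓝[>] (0:ℝ), 4 * B * ρ < 1 := by
        apply nhdsWithin_le_nhds
        exact (ContinuousAt.eventually_lt (by fun_prop) continuousAt_const (by simp))
      have t2 : ∀ᶠ ρ in 𝓝[>] (0:ℝ), 8 * C * ρ < 1 := by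
        apply nhdsWithin_le_nhds
        exact (ContinuousAt.eventually_lt (by fun_prop) continuousAt_const (by simp))
      have t3 : ∀ᶠ ρ in 𝓝[>] (0:ℝ), ρ < r := nhdsWithin_le_nhds (eventually_lt_nhds hr0)
      filter_upwards [t1, t2, t3, self_mem_nhdsWithin] with ρ h1 h2 h3 h4
      have h4 : 0 < ρ := h4
      have := area_ineq q hq hinj C ρ r hC' hC0 h4 h3 hr1 h1.le h2.le
      rw [← hB] at this
      have x1 : (1/ρ + 8 * C * ρ^2)^2 = 1/ρ^2 + 16*C*ρ + 64*C^2*ρ^4 := by field_simp; ring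
      have x2 : (1 - B^2*ρ^4) * (1/ρ^2 - 1/r^2 + B^2 * (r^2 - ρ^2)) =
        1/ρ^2 - 1/r^2 + B^2*r^2 - B^2*ρ^2 - B^2*ρ^2 - B^4*ρ^4*r^2 + B^2*ρ^4*(1/r^2) + B^4*ρ^6 := by
        field_simp; ring
      rw [x1, x2] at this
      have : 0 ≤ B^2*ρ^4*(1/r^2) := by positivity
      have : 0 ≤ B^4*ρ^6 := by positivity
      linarith
    have lim : Tendsto (fun ρ : ℝ => 16*C*ρ + 64*C^2*ρ^4 + B^2*ρ^2 + B^2*ρ^2 + B^4*ρ^4*r^2) (𝓝[>] 0) (𝓝 0) := by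
      apply tendsto_nhdsWithin_of_tendsto_nhds
      have : Continuous (fun ρ : ℝ => 16*C*ρ + 64*C^2*ρ^4 + B^2*ρ^2 + B^2*ρ^2 + B^4*ρ^4*r^2) := by fun_prop
      convert this.tendsto 0 using 2
      simp
    have h := ge_of_tendsto lim ev
    have h5 : (B * r^2)^2 ≤ 1 := by
      have : B^2*r^2 ≤ 1/r^2 := by linarith
      rw [le_div_iff₀ (by positivity)] at this
      linarith
    exact (sq_le_one_iff₀ (by positivity)).1 h5
  have lim : Tendsto (fun r : ℝ => ‖deriv q 0‖ * r^2) (𝓝[<] 1) (𝓝 (‖deriv q 0‖)) := by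
    apply tendsto_nhdsWithin_of_tendsto_nhds
    have : Continuous (fun r : ℝ => ‖deriv q 0‖ * r^2) := by fun_prop
    convert this.tendsto 1 using 2
    simp
  refine le_of_tendsto lim ?_
  filter_upwards [self_mem_nhdsWithin, nhdsWithin_le_nhds (eventually_gt_nhds (zero_lt_one (α := ℝ)))] with r h1 h2
  exact main r h2 h1

lemma bieberbach (f : ℂ → ℂ) (hf : DifferentiableOn ℂ f (ball 0 1)) (hinj : InjOn f (ball 0 1))
    (h0 : deriv f 0 ≠ 0) : ‖deriv (deriv f) 0‖ ≤ 4 * ‖deriv f 0‖ := by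
  have hnb : ball (0:ℂ) 1 ∈ 𝓝 0 := ball_mem_nhds _ one_pos
  have hmem : (0:ℂ) ∈ ball (0:ℂ) 1 := mem_ball_self one_pos
  set F := dslope f 0 with hFdef
  have hF : DifferentiableOn ℂ F (ball 0 1) := (differentiableOn_dslope hnb).2 hf
  have hfF : ∀ z, z * F z = f z - f 0 := by
    intro z; simpa using sub_smul_dslope f 0 z
  have hF0 : F 0 = deriv f 0 := dslope_same f 0
  have hFne : ∀ z ∈ ball (0:ℂ) 1, F z ≠ 0 := by
    intro z hz h
    by_cases hz0 : z = 0
    · rw [hz0, hF0] at h; exact h0 h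
    · have := hfF z
      rw [h, mul_zero] at this
      exact hz0 (hinj hz hmem (sub_eq_zero.1 this.symm))
  have hFd : ∀ z ∈ ball (0:ℂ) 1, HasDerivAt F (deriv F z) z := fun z hz =>
    (hF.differentiableAt (isOpen_ball.mem_nhds hz)).hasDerivAt
  have hF' := hF.deriv isOpen_ball
  -- second derivative
  have hsec : deriv (deriv f) 0 = 2 * deriv F 0 := by
    have e : deriv f =ᶠ[𝓝 0] fun z => F z + z * deriv F z := by
      filter_upwards [hnb] with z hz
      have h1 : HasDerivAt (fun z => f 0 + z * F z) (1 * F z + z * deriv F z) z :=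
        ((hasDerivAt_id z).mul (hFd z hz)).const_add (f 0)
      have : f = fun z => f 0 + z * F z := by funext w; rw [hfF]; ring
      rw [this, h1.deriv, one_mul]
    rw [e.deriv_eq]
    have h2 : HasDerivAt (deriv F) (deriv (deriv F) 0) 0 :=
      (hF'.differentiableAt hnb).hasDerivAt
    have h3 : HasDerivAt (fun z => F z + z * deriv F z) _ 0 := (hFd 0 hmem).add ((hasDerivAt_id (0:ℂ)).mul h2)
    rw [h3.deriv]; simp; ring
  -- logarithm
  obtain ⟨L, hL⟩ := (hF'.div hF hFne).isExactOn_ball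
  set U : ℂ → ℂ := fun z => exp (-(L z - L 0)/2) with hU
  have hUd : ∀ z ∈ ball (0:ℂ) 1, HasDerivAt U (U z * (-(deriv F z / F z)/2)) z := by
    intro z hz
    exact ((((hL z hz).sub_const (L 0)).neg).div_const 2).cexp
  have hUne : ∀ z, U z ≠ 0 := fun z => exp_ne_zero _
  have hU0 : U 0 = 1 := by simp [hU]
  have hUF : ∀ z ∈ ball (0:ℂ) 1, U z^2 * F z = F 0 := by
    have hd : ∀ z ∈ ball (0:ℂ) 1, HasDerivAt (fun z => U z^2 * F z) 0 z := by
      intro z hz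
      have := ((hUd z hz).fun_pow 2).mul (hFd z hz)
      refine this.congr_deriv ?_
      have := hFne z hz
      simp only [Nat.cast_ofNat]
      field_simp
      ring
    intro z hz
    have := isOpen_ball.is_const_of_deriv_eq_zero (convex_ball (0:ℂ) 1).isPreconnected
      (fun z hz => (hd z hz).differentiableAt.differentiableWithinAt) (fun z hz => (hd z hz).deriv) hz hmem
    simpa [hU0] using this
  have hUdiff : DifferentiableOn ℂ U (ball 0 1) := fun z hz => (hUd z hz).differentiableAt.differentiableWithinAt
  set T := dslope U 0 with hT
  have hTd : DifferentiableOn ℂ T (ball 0 1) := (differentiableOn_dslope hnb).2 hUdiff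
  have hUT : ∀ z, U z = 1 + z * T z := by
    intro z
    have := sub_smul_dslope U 0 z
    simp only [sub_zero, smul_eq_mul, hU0] at this
    rw [this]; ring
  have hsq : ∀ z ∈ ball (0:ℂ) 1, z^2 ∈ ball (0:ℂ) 1 := by
    intro z hz
    rw [mem_ball_zero_iff] at hz ⊢
    rw [norm_pow]; exact pow_lt_one₀ (norm_nonneg _) hz two_ne_zero
  set q : ℂ → ℂ := fun z => z * T (z^2) with hq
  have hTsq : DifferentiableOn ℂ (fun z => T (z^2)) (ball 0 1) :=
    hTd.comp (by fun_prop) hsq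
  have hqd : DifferentiableOn ℂ q (ball 0 1) := differentiableOn_id.mul hTsq
  have hg : ∀ z : ℂ, z ≠ 0 → 1/z + q z = U (z^2) / z := by
    intro z hz
    rw [hUT]; simp only [hq]; field_simp
  have hq' : deriv q 0 = - (deriv F 0 / F 0) / 2 := by
    have h1 : HasDerivAt q _ 0 := (hasDerivAt_id (0:ℂ)).mul (hTsq.differentiableAt hnb).hasDerivAt
    rw [h1.deriv]
    simp only [id, zero_mul, add_zero, one_mul]
    have : T (0^2) = deriv U 0 := by rw [zero_pow two_ne_zero]; exact dslope_same U 0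
    rw [this, (hUd 0 hmem).deriv, hU0, one_mul]
  have hA := area_thm q hqd (by simp [hq]) (by
    rintro z ⟨hz, hz0⟩ w ⟨hw, hw0⟩ h
    have hz0 : z ≠ 0 := hz0
    have hw0 : w ≠ 0 := hw0
    simp only at h
    rw [hg z hz0, hg w hw0] at h
    have h1 : f (z^2) = f (w^2) := by
      have a1 := hUF _ (hsq z hz)
      have a2 := hUF _ (hsq w hw)
      have b1 := hfF (z^2)
      have b2 := hfF (w^2)
      have h' : U (z^2) * w = U (w^2) * z := by field_simp at h; linear_combination h
      have h'' : U (z^2)^2 * w^2 = U (w^2)^2 * z^2 := by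
        linear_combination (U (z^2) * w + U (w^2) * z) * h'
      have : U (w^2)^2 * (z^2 * F (z^2)) = U (w^2)^2 * (w^2 * F (w^2)) := by
        linear_combination - F (z^2) * h'' + w^2 * a1 - w^2 * a2
      have := mul_left_cancel₀ (pow_ne_zero 2 (hUne _)) this
      rw [b1, b2] at this
      exact sub_left_inj.1 this
    have h2 := hinj (hsq z hz) (hsq w hw) h1
    rcases sq_eq_sq_iff_eq_or_eq_neg.1 h2 with h3 | h3
    · exact h3
    · exfalso
      rw [h3, neg_sq] at h
      have := hUne (w^2)
      field_simp at h
      norm_num at h)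
  rw [hq'] at hA
  rw [hsec, ← hF0]
  have hF00 : 0 < ‖F 0‖ := norm_pos_iff.2 (hFne 0 hmem)
  rw [norm_div, norm_neg, norm_div, RCLike.norm_ofNat, div_div, div_le_one (by positivity)] at hA
  rw [norm_mul, RCLike.norm_ofNat]
  linarith

lemma isOpen_rhp : IsOpen {z : ℂ | 0 < z.re} := isOpen_lt continuous_const continuous_re

lemma hp_ineq_ne (φ : ℂ → ℂ) (hdiff : DifferentiableOn ℂ φ {z : ℂ | 0 < z.re})
    (hinj : Set.InjOn φ {z : ℂ | 0 < z.re}) (a : ℂ) (ha : 0 < a.re) (hne : deriv φ a ≠ 0) :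
    ‖a.re * deriv (deriv φ) a + deriv φ a‖ ≤ 2 * ‖deriv φ a‖ := by
  set t := a.re with ht
  have htC : (t:ℂ) ≠ 0 := by exact_mod_cast ha.ne'
  have hnb : ball (0:ℂ) 1 ∈ 𝓝 0 := ball_mem_nhds _ one_pos
  have hmem : (0:ℂ) ∈ ball (0:ℂ) 1 := mem_ball_self one_pos
  let m : ℂ → ℂ := fun ξ => 2*t/(1-ξ) + (a - 2*t)
  have h1ne : ∀ ξ ∈ ball (0:ℂ) 1, 1 - ξ ≠ 0 := by
    intro ξ hξ h
    rw [mem_ball_zero_iff, ← sub_eq_zero.1 h] at hξ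
    simp at hξ
  have hmH : MapsTo m (ball 0 1) {z : ℂ | 0 < z.re} := by
    intro ξ hξ
    have h1 := h1ne ξ hξ
    have hn : 0 < normSq (1 - ξ) := normSq_pos.2 h1
    have : (m ξ).re = 2 * t * ((1 - ξ.re)/normSq (1-ξ)) - t := by
      have e : m ξ = ((2*t:ℝ):ℂ) * (1-ξ)⁻¹ + (a - ((2*t:ℝ):ℂ)) := by simp only [m]; push_cast; ring
      rw [e, add_re, re_ofReal_mul, inv_re, sub_re, sub_re, ofReal_re, ← ht, one_re]; ring
    change 0 < (m ξ).re
    rw [this]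
    have hh : 1/2 < (1 - ξ.re)/normSq (1-ξ) := by
      rw [lt_div_iff₀ hn]
      rw [mem_ball_zero_iff] at hξ
      have h2 : ‖ξ‖^2 < 1 := pow_lt_one₀ (norm_nonneg _) hξ two_ne_zero
      rw [Complex.sq_norm, normSq_apply] at h2
      simp only [normSq_apply, sub_re, sub_im, one_re, one_im]
      nlinarith
    nlinarith
  have hmd : ∀ ξ ∈ ball (0:ℂ) 1, HasDerivAt m (2*t/(1-ξ)^2) ξ := by
    intro ξ hξ
    have h1 := h1ne ξ hξ
    have := ((hasDerivAt_const ξ (2*t:ℂ)).div ((hasDerivAt_id ξ).const_sub 1) h1).add_const (a - 2*t)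
    exact this.congr_deriv (by simp)
  have hm0 : m 0 = a := by simp [m]
  have hminj : InjOn m (ball 0 1) := by
    intro ξ hξ η hη h
    have h1 := h1ne ξ hξ
    have h2 := h1ne η hη
    simp only [m] at h
    have h := add_right_cancel h
    rw [div_eq_div_iff h1 h2] at h
    have := mul_left_cancel₀ (mul_ne_zero two_ne_zero htC) h
    linear_combination this
  have hφd : ∀ z ∈ {z : ℂ | 0 < z.re}, HasDerivAt φ (deriv φ z) z := fun z hz =>
    (hdiff.differentiableAt (isOpen_rhp.mem_nhds hz)).hasDerivAt
  let f : ℂ → ℂ := φ ∘ m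
  have hfd : ∀ ξ ∈ ball (0:ℂ) 1, HasDerivAt f (deriv φ (m ξ) * (2*t/(1-ξ)^2)) ξ := fun ξ hξ =>
    (hφd _ (hmH hξ)).comp ξ (hmd ξ hξ)
  have hf0 : deriv f 0 = deriv φ a * (2*t) := by
    rw [(hfd 0 hmem).deriv, hm0]; simp
  have hf2 : deriv (deriv f) 0 = deriv (deriv φ) a * (2*t) * (2*t) + deriv φ a * (4*t) := by
    have e : deriv f =ᶠ[𝓝 0] fun ξ => deriv φ (m ξ) * (2*t/(1-ξ)^2) := by
      filter_upwards [hnb] with ξ hξ using (hfd ξ hξ).deriv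
    rw [e.deriv_eq]
    have h1 : HasDerivAt (deriv φ) (deriv (deriv φ) (m 0)) (m 0) :=
      (((hdiff.deriv isOpen_rhp).differentiableAt (isOpen_rhp.mem_nhds (hmH hmem)))).hasDerivAt
    have h2 := h1.comp 0 (hmd 0 hmem)
    have h3 : HasDerivAt (fun ξ : ℂ => 2*(t:ℂ)/(1-ξ)^2) (4*(t:ℂ)) 0 := by
      have := (hasDerivAt_const (0:ℂ) (2*t:ℂ)).div (((hasDerivAt_id (0:ℂ)).const_sub 1).fun_pow 2) (by simp)
      refine this.congr_deriv ?_
      simp; ring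
    have h4 : HasDerivAt (fun ξ => deriv φ (m ξ) * (2*t/(1-ξ)^2)) _ 0 := h2.mul h3
    rw [h4.deriv, Function.comp_apply, hm0]; simp
  have hB := bieberbach f (fun ξ hξ => (hfd ξ hξ).differentiableAt.differentiableWithinAt)
    (hinj.comp hminj hmH) (by rw [hf0]; exact mul_ne_zero hne (mul_ne_zero two_ne_zero htC))
  rw [hf0, hf2] at hB
  have e1 : deriv (deriv φ) a * (2*t) * (2*t) + deriv φ a * (4*t) = ((4*t:ℝ):ℂ) * (t * deriv (deriv φ) a + deriv φ a) := by
    push_cast; ring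
  have e2 : deriv φ a * (2*t) = ((2*t:ℝ):ℂ) * deriv φ a := by push_cast; ring
  rw [e1, e2, norm_mul, norm_mul, norm_real, norm_real, Real.norm_of_nonneg (by positivity), Real.norm_of_nonneg (by positivity)] at hB
  refine le_of_mul_le_mul_left ?_ (show 0 < 4*t by positivity)
  linarith

lemma hp_ineq (φ : ℂ → ℂ) (hdiff : DifferentiableOn ℂ φ {z : ℂ | 0 < z.re})
    (hinj : Set.InjOn φ {z : ℂ | 0 < z.re}) (a : ℂ) (ha : 0 < a.re) :
    ‖a.re * deriv (deriv φ) a + deriv φ a‖ ≤ 2 * ‖deriv φ a‖ := by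
  have hU : {z : ℂ | 0 < z.re} ∈ 𝓝 a := isOpen_rhp.mem_nhds ha
  have hd1 := hdiff.deriv isOpen_rhp
  have hd2 := hd1.deriv isOpen_rhp
  have c1 : ContinuousAt (deriv φ) a := (hd1.differentiableAt hU).continuousAt
  have c2 : ContinuousAt (deriv (deriv φ)) a := (hd2.differentiableAt hU).continuousAt
  rcases (hd1.analyticAt hU).eventually_eq_zero_or_eventually_ne_zero with h | h
  · exfalso
    obtain ⟨ε, hε, hb⟩ := Metric.mem_nhds_iff.1 (Filter.inter_mem h hU)
    have hmem : a ∈ ball a ε := mem_ball_self hε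
    have hmem2 : a + (ε/2:ℝ) ∈ ball a ε := by
      simp only [mem_ball, dist_eq, add_sub_cancel_left, norm_real]
      rw [Real.norm_of_nonneg (by positivity)]; linarith
    have := isOpen_ball.is_const_of_deriv_eq_zero (convex_ball a ε).isPreconnected
      (hdiff.mono (fun z hz => (hb hz).2)) (fun z hz => (hb hz).1) hmem hmem2
    have := hinj (hb hmem).2 (hb hmem2).2 this
    have h3 : ((ε/2:ℝ):ℂ) = 0 := by linear_combination -this
    have h4 : ε/2 = 0 := by exact_mod_cast h3
    linarith
  · have l1 : ContinuousAt (fun a : ℂ => ‖a.re * deriv (deriv φ) a + deriv φ a‖) a := by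
      have : ContinuousAt (fun a : ℂ => (a.re : ℂ)) a := by fun_prop
      exact ((this.mul c2).add c1).norm
    have l2 : ContinuousAt (fun a : ℂ => 2 * ‖deriv φ a‖) a := continuousAt_const.mul c1.norm
    refine le_of_tendsto_of_tendsto (b := 𝓝[≠] a) (tendsto_nhdsWithin_of_tendsto_nhds l1)
      (tendsto_nhdsWithin_of_tendsto_nhds l2) ?_
    filter_upwards [h, nhdsWithin_le_nhds hU] with z hz hzU
    exact hp_ineq_ne φ hdiff hinj z hzU hz

end helpers

open MeasureTheory Metric Set Filter Topology in
/-- Half-plane Koebe distortion estimate (inequality (29) of the paper). -/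
theorem halfplane_distortion (φ : ℂ → ℂ)
    (hdiff : DifferentiableOn ℂ φ {z : ℂ | 0 < z.re})
    (hinj : Set.InjOn φ {z : ℂ | 0 < z.re}) :
    ∀ x : ℝ, 1 < x → ∀ y : ℝ,
      ‖deriv φ ((x : ℂ) + (y : ℂ) * Complex.I)‖ / (8 * x)
          ≤ ‖deriv φ ((1 : ℂ) + (y : ℂ) * Complex.I)‖ ∧
      ‖deriv φ ((1 : ℂ) + (y : ℂ) * Complex.I)‖
          ≤ 2 * x ^ 3 * ‖deriv φ ((x : ℂ) + (y : ℂ) * Complex.I)‖ := by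
  intro x hx y
  let P : ℝ → ℂ := fun t => deriv φ ((t : ℂ) + (y : ℂ) * Complex.I)
  let Q : ℝ → ℂ := fun t => deriv (deriv φ) ((t : ℂ) + (y : ℂ) * Complex.I)
  let N : ℝ → ℝ := fun t => normSq (P t)
  let D : ℝ → ℝ := fun t => 2 * ((P t).re * (Q t).re + (P t).im * (Q t).im)
  have hH : ∀ t : ℝ, 0 < t → 0 < ((t : ℂ) + (y : ℂ) * Complex.I).re := by intro t ht; simpa using ht
  have hP : ∀ t, 0 < t → HasDerivAt P (Q t) t := by
    intro t ht
    have h1 : HasDerivAt (deriv φ) (Q t) ((t : ℂ) + (y : ℂ) * Complex.I) :=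
      ((hdiff.deriv isOpen_rhp).differentiableAt (isOpen_rhp.mem_nhds (hH t ht))).hasDerivAt
    have h2 : HasDerivAt (fun t : ℝ => (t : ℂ) + (y : ℂ) * Complex.I) 1 t :=
      (ofRealCLM.hasDerivAt (x := t)).add_const _
    have h3 := h1.comp t h2
    rw [mul_one] at h3
    exact h3
  have hN : ∀ t, 0 < t → HasDerivAt N (D t) t := by
    intro t ht
    have hre : HasDerivAt (fun t => (P t).re) (Q t).re t := (reCLM.hasFDerivAt.comp_hasDerivAt t (hP t ht))
    have him : HasDerivAt (fun t => (P t).im) (Q t).im t := (imCLM.hasFDerivAt.comp_hasDerivAt t (hP t ht))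
    have : HasDerivAt (fun t => (P t).re * (P t).re + (P t).im * (P t).im) _ t := (hre.mul hre).add (him.mul him)
    refine (this.congr_deriv ?_)
    simp only [D]; ring
  have hN0 : ∀ t, 0 ≤ N t := fun t => normSq_nonneg _
  have hbd : ∀ t, 0 < t → -(6 * N t) ≤ t * D t ∧ t * D t ≤ 2 * N t := by
    intro t ht
    have h := hp_ineq φ hdiff hinj _ (hH t ht)
    have hret : ((t : ℂ) + (y : ℂ) * Complex.I).re = t := by simp
    rw [hret] at h
    change ‖t * Q t + P t‖ ≤ 2 * ‖P t‖ at h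
    have hPQ : |(t * Q t * (starRingEnd ℂ) (P t) + P t * (starRingEnd ℂ) (P t)).re| ≤ 2 * N t := by
      refine (abs_re_le_norm _).trans ?_
      rw [← add_mul, norm_mul, RCLike.norm_conj]
      simp only [N]
      rw [normSq_eq_norm_sq]
      nlinarith [norm_nonneg (P t)]
    have e : (t * Q t * (starRingEnd ℂ) (P t) + P t * (starRingEnd ℂ) (P t)).re = t * D t / 2 + N t := by
      simp only [D, N, normSq_apply]
      simp
      ring
    rw [e, abs_le] at hPQ
    constructor <;> linarith [hPQ.1, hPQ.2]
  have hIcc : ∀ t ∈ Icc (1:ℝ) x, 0 < t := fun t ht => zero_lt_one.trans_le ht.1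
  have hint : ∀ t ∈ interior (Icc (1:ℝ) x), 0 < t := fun t ht => hIcc t (interior_subset ht)
  have d1 : ∀ t, 0 < t → HasDerivAt (fun t => t^6 * N t) (6*t^5 * N t + t^6 * D t) t := by
    intro t ht
    exact ((hasDerivAt_pow 6 t).mul (hN t ht)).congr_deriv (by norm_num)
  have d2 : ∀ t, 0 < t → HasDerivAt (fun t => N t / t^2) ((D t * t^2 - N t * (2*t))/(t^2)^2) t := by
    intro t ht
    exact ((hN t ht).div (hasDerivAt_pow 2 t) (by positivity)).congr_deriv (by norm_num)
  have mono : MonotoneOn (fun t => t^6 * N t) (Icc 1 x) := by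
    apply monotoneOn_of_deriv_nonneg (convex_Icc 1 x)
    · exact fun t ht => (d1 t (hIcc t ht)).continuousAt.continuousWithinAt
    · exact fun t ht => (d1 t (hint t ht)).differentiableAt.differentiableWithinAt
    · intro t ht
      have ht0 := hint t ht
      rw [(d1 t ht0).deriv]
      have := (hbd t ht0).1
      have : 0 ≤ t^5 * (6 * N t + t * D t) := mul_nonneg (by positivity) (by linarith)
      linarith
  have anti : AntitoneOn (fun t => N t / t^2) (Icc 1 x) := by
    apply antitoneOn_of_deriv_nonpos (convex_Icc 1 x)
    · exact fun t ht => (d2 t (hIcc t ht)).continuousAt.continuousWithinAt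
    · exact fun t ht => (d2 t (hint t ht)).differentiableAt.differentiableWithinAt
    · intro t ht
      have ht0 := hint t ht
      rw [(d2 t ht0).deriv]
      have := (hbd t ht0).2
      apply div_nonpos_of_nonpos_of_nonneg _ (by positivity)
      nlinarith
  have i1 := mono (left_mem_Icc.2 hx.le) (right_mem_Icc.2 hx.le) hx.le
  have i2 := anti (left_mem_Icc.2 hx.le) (right_mem_Icc.2 hx.le) hx.le
  simp only [N, normSq_eq_norm_sq, one_pow, one_mul, div_one] at i1 i2
  have hP1 : P 1 = deriv φ ((1 : ℂ) + (y : ℂ) * Complex.I) := by simp [P]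
  rw [hP1] at i1 i2
  change _ ≤ x^6 * ‖deriv φ ((x : ℂ) + (y : ℂ) * Complex.I)‖^2 at i1
  change ‖deriv φ ((x : ℂ) + (y : ℂ) * Complex.I)‖^2 / x^2 ≤ _ at i2
  have hx0 : 0 < x := by linarith
  generalize deriv φ ((1 : ℂ) + (y : ℂ) * Complex.I) = u at *
  generalize deriv φ ((x : ℂ) + (y : ℂ) * Complex.I) = v at *
  constructor
  · have : ‖v‖ / x ≤ ‖u‖ := by
      apply (sq_le_sq₀ (by positivity) (norm_nonneg _)).1
      rwa [div_pow]
    refine le_trans ?_ this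
    gcongr
    linarith
  · have : ‖u‖ ≤ x^3 * ‖v‖ := by
      apply (sq_le_sq₀ (norm_nonneg _) (by positivity)).1
      calc _ ≤ _ := i1
        _ = _ := by ring
    have : 0 ≤ x^3 * ‖v‖ := by positivity
    linarith
end

section
/- Let φ : ℂ → ℂ be holomorphic and injective on the open unit disk 𝔻, let U = φ(𝔻), and suppose there exist H > 0 and 0 < α ≤ 1 such that |φ(z₁) − φ(z₂)| ≤ H·|φ′(0)|·|z₁ − z₂|^α for all z₁, z₂ ∈ 𝔻. Then (1/4)·|φ′(0)| ≤ dist(φ(0), ∂U) ≤ diam(U) ≤ 2^α·H·|φ′(0)|. In particular |φ′(0)|, dist(φ(0), ∂U) and diam(U) are pairwise comparable with constants depending only on H and α. -/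
open Complex Metric

open MeasureTheory Set Filter Topology in
theorem K_polar {a b : ℝ} (ha : 0 < a) (F : ℂ → ENNReal)
    (hF : ContinuousOn F {z : ℂ | a < ‖z‖ ∧ ‖z‖ < b}) :
    ∫⁻ z in {z : ℂ | a < ‖z‖ ∧ ‖z‖ < b}, F z =
      ∫⁻ r in Ioo a b, ∫⁻ θ in Ioo (-Real.pi) Real.pi,
        ENNReal.ofReal r * F (circleMap 0 r θ) := by
  classical
  set A : Set ℂ := {z : ℂ | a < ‖z‖ ∧ ‖z‖ < b} with hA
  have hAo : IsOpen A := (isOpen_lt continuous_const continuous_norm).inter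
    (isOpen_lt continuous_norm continuous_const)
  have hm : Measurable (A.indicator F) := by
    have := hF.measurable_piecewise (g := fun _ => 0) continuousOn_const hAo.measurableSet
    rwa [← Set.piecewise_eq_indicator]
  rw [← lintegral_indicator hAo.measurableSet, ← Complex.lintegral_comp_polarCoord_symm]
  have ht : polarCoord.target = Ioi (0:ℝ) ×ˢ Ioo (-Real.pi) Real.pi := rfl
  have hsymm : ∀ p : ℝ × ℝ, Complex.polarCoord.symm p = circleMap 0 p.1 p.2 := by
    intro p
    rw [Complex.polarCoord_symm_apply, circleMap_zero, Complex.exp_mul_I]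
    simp
  simp_rw [hsymm, smul_eq_mul]
  rw [ht, Measure.volume_eq_prod, ← Measure.prod_restrict, lintegral_prod]
  · rw [← lintegral_indicator measurableSet_Ioi, ← lintegral_indicator measurableSet_Ioo]
    congr 1
    ext r
    by_cases hr : r ∈ Ioo a b
    · have hr0 : r ∈ Ioi (0:ℝ) := ha.trans hr.1
      rw [indicator_of_mem hr0, indicator_of_mem hr]
      congr 1
      ext θ
      rw [indicator_of_mem]
      simp only [hA, mem_ofPred_eq, norm_circleMap_zero, abs_of_pos hr0.out]
      exact hr
    · rw [indicator_of_notMem hr]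
      by_cases hr0 : r ∈ Ioi (0:ℝ)
      · rw [indicator_of_mem hr0]
        have : ∀ θ, A.indicator F (circleMap 0 r θ) = 0 := by
          intro θ
          rw [indicator_of_notMem]
          simp only [hA, mem_ofPred_eq, norm_circleMap_zero, abs_of_pos hr0.out]
          exact hr
        simp [this]
      · rw [indicator_of_notMem hr0]
  · apply Measurable.aemeasurable
    apply Measurable.mul
    · fun_prop
    · apply hm.comp
      apply Continuous.measurable
      unfold circleMap
      fun_prop

open MeasureTheory Set Filter Topology in
theorem K_inv {a b : ℝ} (ha : 0 < a) (hab : a ≤ b) (c : ENNReal) :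
    ∫⁻ r in Ioo a b, c * ENNReal.ofReal r⁻¹ = c * ENNReal.ofReal (Real.log (b / a)) := by
  rw [lintegral_const_mul _ (by fun_prop), ← integral_inv_of_pos ha (ha.trans_le hab),
    intervalIntegral.integral_of_le hab, integral_Ioc_eq_integral_Ioo,
    ofReal_integral_eq_lintegral_ofReal]
  · have : IntegrableOn (fun x : ℝ => x⁻¹) (Icc a b) := by
      apply ContinuousOn.integrableOn_Icc
      exact continuousOn_inv₀.mono (fun x hx => (ha.trans_le hx.1).ne')
    exact this.mono_set Ioo_subset_Icc_self
  · filter_upwards [ae_restrict_mem measurableSet_Ioo] with x hx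
    exact inv_nonneg.2 (ha.trans hx.1).le

open MeasureTheory Set Filter Topology in
theorem K_det (c : ℂ) : |((ContinuousLinearMap.toSpanSingleton ℂ c).restrictScalars ℝ).det| = ‖c‖ ^ 2 := by
  simp [ContinuousLinearMap.det, LinearMap.det_restrictScalars,
      Algebra.norm_complex_eq, Complex.normSq_eq_norm_sq]

open MeasureTheory Set Filter Topology in
theorem K_cov {s : Set ℂ} (hs : MeasurableSet s) {f f' : ℂ → ℂ} (hf : ∀ z ∈ s, HasDerivAt f (f' z) z)
    (hi : InjOn f s) (g : ℂ → ENNReal) :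
    ∫⁻ x in f '' s, g x = ∫⁻ x in s, ENNReal.ofReal (‖f' x‖ ^ 2) * g (f x) := by
  rw [lintegral_image_eq_lintegral_abs_det_fderiv_mul volume hs
    (f' := fun z => (ContinuousLinearMap.toSpanSingleton ℂ (f' z)).restrictScalars ℝ) _ hi]
  · simp_rw [K_det]
  · intro x hx
    exact ((hf x hx).hasFDerivAt.restrictScalars ℝ).hasFDerivWithinAt

open MeasureTheory Set Filter Topology in
theorem K_local (q : ℂ → ℂ) (hd : DifferentiableOn ℂ q (ball 0 1)) (hi : InjOn q (ball 0 1))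
    (h0 : q 0 = 0) (hq : ∀ z ∈ ball (0:ℂ) 1, ∀ z' ∈ ball (0:ℂ) 1, q z * q z' ≠ 1)
    {c : ℝ} (hc : 0 < c) (hca : c < ‖deriv q 0‖) :
    ∃ ε > 0, ε < 1 ∧ c * ε < 1 ∧ ∀ z ∈ ball (0:ℂ) 1, ε < ‖z‖ → c * ε < ‖q z‖ ∧ ‖q z‖ < (c * ε)⁻¹ := by
  have hne : deriv q 0 ≠ 0 := by
    intro h; rw [h, norm_zero] at hca; linarith
  have hs : HasStrictDerivAt q (deriv q 0) 0 :=
    (hd.analyticAt (isOpen_ball.mem_nhds (by simp))).hasStrictDerivAt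
  set g := hs.localInverse q (deriv q 0) 0 hne with hg
  have hr : ∀ᶠ x in 𝓝 (q 0), q (g x) = x := hs.eventually_right_inverse hne
  have hgd : HasStrictDerivAt g (deriv q 0)⁻¹ (q 0) := hs.to_localInverse hne
  have hl : ∀ᶠ x in 𝓝 (0:ℂ), g (q x) = x := hs.eventually_left_inverse hne
  have hg0 : g 0 = 0 := by simpa [h0] using hl.self_of_nhds
  rw [h0] at hr hgd
  have hb : ∀ᶠ x in 𝓝 (0:ℂ), ‖g x‖ ≤ c⁻¹ * ‖x‖ := by
    have : ∀ᶠ x in 𝓝 (0:ℂ), ‖g x - g 0 - (x - 0) • (deriv q 0)⁻¹‖ ≤ (c⁻¹ - ‖deriv q 0‖⁻¹) * ‖x - 0‖ := by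
      apply (hasDerivAt_iff_isLittleO.1 hgd.hasDerivAt).def
      have := inv_strictAnti₀ hc hca
      linarith
    filter_upwards [this] with x hx
    rw [hg0, sub_zero, sub_zero] at hx
    have h1 := norm_add_le (g x - x • (deriv q 0)⁻¹) (x • (deriv q 0)⁻¹)
    rw [sub_add_cancel, norm_smul, norm_inv] at h1
    linarith
  have hin : ∀ᶠ x in 𝓝 (0:ℂ), g x ∈ ball (0:ℂ) 1 := by
    have := hgd.hasDerivAt.continuousAt
    apply this.eventually_mem
    rw [hg0]; exact isOpen_ball.mem_nhds (by simp)
  obtain ⟨δ, hδ, H⟩ := Metric.eventually_nhds_iff_ball.1 (hr.and (hb.and hin))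
  obtain ⟨ε, hε0, hε⟩ : ∃ ε > 0, ε < min 1 (min c⁻¹ (δ / c)) := 
    exists_between (by positivity)
  simp only [lt_min_iff] at hε
  have h2 : c * ε < 1 := by
    have := mul_lt_mul_of_pos_left hε.2.1 hc
    rwa [mul_inv_cancel₀ hc.ne'] at this
  have h3 : c * ε < δ := by
    have := hε.2.2
    rw [lt_div_iff₀ hc] at this; linarith
  have hcε : 0 < c * ε := by positivity
  refine ⟨ε, hε0, hε.1, h2, fun z hz hzε => ⟨?_, ?_⟩⟩
  · by_contra hcon
    push Not at hcon
    obtain ⟨e1, e2, e3⟩ := H (q z) (by simpa using hcon.trans_lt h3)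
    have := hi e3 hz e1
    rw [this] at e2
    have : ‖z‖ ≤ c⁻¹ * (c * ε) := e2.trans (by gcongr)
    rw [inv_mul_cancel_left₀ hc.ne'] at this
    linarith
  · by_contra hcon
    push Not at hcon
    have hz0 : 0 < ‖q z‖ := lt_of_lt_of_le (by positivity) hcon
    have : ‖(q z)⁻¹‖ ≤ c * ε := by
      rw [norm_inv]; exact inv_le_of_inv_le₀ hcε hcon
    obtain ⟨e1, e2, e3⟩ := H (q z)⁻¹ (by simpa using this.trans_lt h3)
    apply hq z hz _ e3
    rw [e1, mul_inv_cancel₀ (norm_pos_iff.1 hz0)]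

open MeasureTheory Set Filter Topology in
theorem K_mean {h : ℂ → ℂ} (hd : DifferentiableOn ℂ h (ball 0 1)) (h0 : h 0 = 1) {r : ℝ}
    (hr0 : 0 < r) (hr : r < 1) :
    ENNReal.ofReal (2 * Real.pi) ≤
      ∫⁻ θ in Ioo (-Real.pi) Real.pi, ENNReal.ofReal (‖h (circleMap 0 r θ)‖ ^ 2) := by
  have h1 : Real.circleAverage (fun z => h z ^ 2) 0 r = 1 := by
    rw [DiffContOnCl.circleAverage]
    · simp [h0]
    · rw [abs_of_pos hr0]
      apply DifferentiableOn.diffContOnCl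
      rw [closure_ball _ hr0.ne']
      exact (hd.mono (closedBall_subset_ball hr)).pow 2
  have h2 : ∫ θ in (-Real.pi)..Real.pi, h (circleMap 0 r θ) ^ 2 = 2 * Real.pi := by
    have hp : Function.Periodic (fun θ => h (circleMap 0 r θ) ^ 2) (2 * Real.pi) := by
      intro θ; simp only [periodic_circleMap 0 r θ]
    have := hp.intervalIntegral_add_eq (-Real.pi) 0
    rw [show -Real.pi + 2 * Real.pi = Real.pi by ring, zero_add] at this
    rw [this]
    rw [Real.circleAverage_def, inv_smul_eq_iff₀ (by positivity)] at h1
    rw [h1]; simp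
  rw [intervalIntegral.integral_of_le (by linarith [Real.pi_pos]), integral_Ioc_eq_integral_Ioo] at h2
  have h3 := enorm_integral_le_lintegral_enorm (μ := volume.restrict (Ioo (-Real.pi) Real.pi))
    (fun θ => h (circleMap 0 r θ) ^ 2)
  rw [h2] at h3
  simp_rw [← ofReal_norm, norm_pow] at h3
  convert h3 using 2
  simp [abs_of_pos Real.pi_pos]

open MeasureTheory Set Filter Topology in
theorem K_annulus {a b : ℝ} (ha : 0 < a) (hab : a ≤ b) :
    ∫⁻ z in {z : ℂ | a < ‖z‖ ∧ ‖z‖ < b}, ENNReal.ofReal ((‖z‖ ^ 2)⁻¹) =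
      ENNReal.ofReal (2 * Real.pi) * ENNReal.ofReal (Real.log (b / a)) := by
  rw [K_polar ha, ← K_inv ha hab]
  · apply setLIntegral_congr_fun measurableSet_Ioo
    intro r hr
    have hr0 : 0 < r := ha.trans hr.1
    simp only [norm_circleMap_zero, abs_of_pos hr0]
    rw [lintegral_const, ← ENNReal.ofReal_mul hr0.le, mul_comm]
    congr 1
    · rw [Measure.restrict_apply_univ, Real.volume_Ioo]; congr 1; ring
    · congr 1; field_simp
  · apply ENNReal.continuous_ofReal.comp_continuousOn
    apply ContinuousOn.inv₀ (by fun_prop)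
    intro z hz
    have := ha.trans hz.1
    positivity

open MeasureTheory Set Filter Topology in
theorem K_upper {δ : ℝ} (hδ : 0 < δ) (hδ1 : δ < 1) {S : Set ℂ} (hS : MeasurableSet S)
    (hsub : S ⊆ {z : ℂ | δ < ‖z‖ ∧ ‖z‖ < δ⁻¹}) (hd : ∀ z ∈ S, ∀ w ∈ S, z * w ≠ 1) :
    ∫⁻ z in S, ENNReal.ofReal ((‖z‖ ^ 2)⁻¹) ≤
      ENNReal.ofReal (2 * Real.pi) * ENNReal.ofReal (Real.log δ⁻¹) := by
  set A : Set ℂ := {z : ℂ | δ < ‖z‖ ∧ ‖z‖ < δ⁻¹} with hA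
  have hne : ∀ z ∈ S, z ≠ 0 := fun z hz => norm_pos_iff.1 (hδ.trans (hsub hz).1)
  have h1 : ∫⁻ z in (fun z => z⁻¹) '' S, ENNReal.ofReal ((‖z‖ ^ 2)⁻¹) =
      ∫⁻ z in S, ENNReal.ofReal ((‖z‖ ^ 2)⁻¹) := by
    rw [K_cov hS (fun z hz => hasDerivAt_inv (hne z hz)) inv_injective.injOn]
    apply setLIntegral_congr_fun hS
    intro z hz
    have : 0 < ‖z‖ := norm_pos_iff.2 (hne z hz)
    simp only
    rw [← ENNReal.ofReal_mul (by positivity)]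
    congr 1
    simp
    field_simp
  have hSi : MeasurableSet ((fun z : ℂ => z⁻¹) '' S) := by
    rw [Set.image_inv_eq_inv]
    exact hS.inv
  have hdis : Disjoint S ((fun z : ℂ => z⁻¹) '' S) := by
    rw [Set.disjoint_left]
    rintro _ hz ⟨w, hw, rfl⟩
    exact hd _ hz w hw (inv_mul_cancel₀ (hne w hw))
  have hU : S ∪ ((fun z : ℂ => z⁻¹) '' S) ⊆ A := by
    apply union_subset hsub
    rintro _ ⟨w, hw, rfl⟩
    have hw0 : 0 < ‖w‖ := norm_pos_iff.2 (hne w hw)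
    refine ⟨?_, ?_⟩
    · rw [norm_inv, lt_inv_comm₀ hδ hw0]; exact (hsub hw).2
    · rw [norm_inv]; exact inv_strictAnti₀ hδ (hsub hw).1
  have h2 := lintegral_mono_set (μ := volume) (f := fun z : ℂ => ENNReal.ofReal ((‖z‖ ^ 2)⁻¹)) hU
  rw [lintegral_union hSi hdis, h1, K_annulus hδ (hδ1.le.trans (one_le_inv₀ hδ |>.2 hδ1.le)),
    show δ⁻¹ / δ = δ⁻¹ ^ 2 by rw [div_eq_mul_inv, sq], Real.log_pow, ← two_mul,
    ENNReal.ofReal_mul (p := ((2:ℕ):ℝ)) (by positivity)] at h2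
  rw [show ENNReal.ofReal ((2:ℕ):ℝ) = 2 by simp, mul_left_comm] at h2
  exact (ENNReal.mul_le_mul_iff_right (by simp) (by simp)).1 h2

open MeasureTheory Set Filter Topology in
theorem K_BE (q : ℂ → ℂ) (hd : DifferentiableOn ℂ q (ball 0 1)) (hi : InjOn q (ball 0 1))
    (h0 : q 0 = 0) (hq : ∀ z ∈ ball (0:ℂ) 1, ∀ z' ∈ ball (0:ℂ) 1, q z * q z' ≠ 1) :
    ‖deriv q 0‖ ≤ 1 := by
  by_contra hcon
  push Not at hcon
  obtain ⟨c, hc1, hca⟩ := exists_between hcon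
  have hc : 0 < c := by linarith
  obtain ⟨ε, hε0, hε1, hcε, H⟩ := K_local q hd hi h0 hq hc hca
  set A : Set ℂ := {z : ℂ | ε < ‖z‖ ∧ ‖z‖ < 1} with hA
  have hAo : IsOpen A := (isOpen_lt continuous_const continuous_norm).inter
    (isOpen_lt continuous_norm continuous_const)
  have hAb : A ⊆ ball 0 1 := fun z hz => by simpa using hz.2
  have hm : MeasurableSet (q '' A) :=
    hAo.measurableSet.image_of_continuousOn_injOn (hd.continuousOn.mono hAb) (hi.mono hAb)
  have hcε0 : 0 < c * ε := by positivity
  have hu := K_upper hcε0 hcε hm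
    (by rintro _ ⟨z, hz, rfl⟩; exact H z (hAb hz) hz.1)
    (by rintro _ ⟨z, hz, rfl⟩ _ ⟨w, hw, rfl⟩; exact hq z (hAb hz) w (hAb hw))
  have hda : ∀ z ∈ ball (0:ℂ) 1, DifferentiableAt ℂ q z := fun z hz =>
    hd.differentiableAt (isOpen_ball.mem_nhds hz)
  rw [K_cov hAo.measurableSet (fun z hz => (hda z (hAb hz)).hasDerivAt) (hi.mono hAb)] at hu
  have hdd : DifferentiableOn ℂ (deriv q) (ball 0 1) := hd.deriv isOpen_ball
  have hne : ∀ z ∈ ball (0:ℂ) 1, z ≠ 0 → q z ≠ 0 := by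
    intro z hz hz0 h
    exact hz0 (hi hz (by simp) (h.trans h0.symm))
  have hds : DifferentiableOn ℂ (dslope q 0) (ball 0 1) :=
    (differentiableOn_dslope (isOpen_ball.mem_nhds (by simp))).2 hd
  have hd0 : deriv q 0 ≠ 0 := norm_pos_iff.1 (by linarith)
  have hsl : ∀ z, z ≠ 0 → dslope q 0 z = q z / z := by
    intro z hz
    rw [dslope_of_ne _ hz, slope_def_field, h0]; simp
  have hh : DifferentiableOn ℂ (fun z => deriv q z / dslope q 0 z) (ball 0 1) := by
    apply hdd.div hds
    intro z hz
    by_cases hz0 : z = 0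
    · rw [hz0, dslope_same]; exact hd0
    · rw [hsl z hz0]; exact div_ne_zero (hne z hz hz0) hz0
  rw [K_polar hε0] at hu
  · have hlow : ∫⁻ r in Ioo ε 1, ENNReal.ofReal (2 * Real.pi) * ENNReal.ofReal r⁻¹ ≤ 
        ENNReal.ofReal (2 * Real.pi) * ENNReal.ofReal (Real.log (c * ε)⁻¹) := by
      refine le_trans ?_ hu
      apply setLIntegral_mono' measurableSet_Ioo
      intro r hr
      have hr0 : 0 < r := hε0.trans hr.1
      have hk := K_mean hh (by simp [hd0]) hr0 hr.2
      rw [mul_comm]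
      refine (mul_le_mul_right hk _).trans ?_
      rw [← lintegral_const_mul' _ _ (by simp)]
      apply lintegral_mono
      intro θ
      have hcn : ‖circleMap 0 r θ‖ = r := by simp [abs_of_pos hr0]
      have hc0 : circleMap 0 r θ ≠ 0 := norm_pos_iff.1 (by rw [hcn]; exact hr0)
      have hcb : circleMap 0 r θ ∈ ball (0:ℂ) 1 := by simpa [abs_of_pos hr0] using hr.2
      have hqn : 0 < ‖q (circleMap 0 r θ)‖ := norm_pos_iff.2 (hne _ hcb hc0)
      simp only
      rw [← ENNReal.ofReal_mul (by positivity), ← ENNReal.ofReal_mul (by positivity),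
        ← ENNReal.ofReal_mul (by positivity), hsl _ hc0, norm_div, norm_div, hcn]
      apply le_of_eq
      congr 1
      field_simp
    rw [K_inv hε0 hε1.le, ENNReal.mul_le_mul_iff_right (by simp [Real.pi_pos]) ENNReal.ofReal_ne_top,
      one_div] at hlow
    have hlog : 0 ≤ Real.log (c * ε)⁻¹ := Real.log_nonneg (one_le_inv₀ hcε0 |>.2 hcε.le)
    rw [ENNReal.ofReal_le_ofReal_iff hlog, Real.log_le_log_iff (by positivity) (by positivity),
      inv_le_inv₀ hε0 hcε0] at hlow
    nlinarith
  · have e : ∀ z ∈ A, ENNReal.ofReal (‖deriv q z‖ ^ 2) * ENNReal.ofReal ((‖q z‖ ^ 2)⁻¹) =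
        ENNReal.ofReal (‖deriv q z‖ ^ 2 * (‖q z‖ ^ 2)⁻¹) := fun z hz => by
      rw [ENNReal.ofReal_mul (by positivity)]
    refine ContinuousOn.congr ?_ e
    apply ENNReal.continuous_ofReal.comp_continuousOn
    refine ((hdd.continuousOn.mono hAb).norm.pow 2).mul 
      (((hd.continuousOn.mono hAb).norm.pow 2).inv₀ ?_)
    intro z hz
    exact pow_ne_zero 2 (norm_pos_iff.2 (hne z (hAb hz) (norm_pos_iff.1 (hε0.trans hz.1)))).ne'

open Set Filter Topology in
theorem K_sqrt {f : ℂ → ℂ} (hd : DifferentiableOn ℂ f (ball 0 1)) (h0 : f 0 = 1)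
    (hne : ∀ z ∈ ball (0:ℂ) 1, f z ≠ 0) :
    ∃ p : ℂ → ℂ, DifferentiableOn ℂ p (ball 0 1) ∧ p 0 = 1 ∧
      ∀ z ∈ ball (0:ℂ) 1, p z ^ 2 = f z := by
  have hx : DifferentiableOn ℂ (fun z => deriv f z / f z) (ball 0 1) :=
    (hd.deriv isOpen_ball).div hd hne
  obtain ⟨L, hL0, hL⟩ := hx.isExactOn_ball.with_val_at 0 0
  have hderiv : ∀ z ∈ ball (0:ℂ) 1, HasDerivAt (fun z => f z * Complex.exp (-L z)) 0 z := by
    intro z hz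
    have h1 := (hd.differentiableAt (isOpen_ball.mem_nhds hz)).hasDerivAt.mul (hL z hz).neg.cexp
    have hz0 := hne z hz
    have h2 : deriv f z * cexp ((-L) z) + f z * (cexp ((-L) z) * -(deriv f z / f z)) = 0 := by
      field_simp
      ring
    rw [h2] at h1
    exact h1
  have hconst : ∀ z ∈ ball (0:ℂ) 1, f z * Complex.exp (-L z) = 1 := by
    intro z hz
    have := isOpen_ball.is_const_of_deriv_eq_zero (convex_ball (0:ℂ) 1).isPreconnected
      (fun z hz => (hderiv z hz).differentiableAt.differentiableWithinAt)
      (fun z hz => (hderiv z hz).deriv) hz (show (0:ℂ) ∈ ball (0:ℂ) 1 by simp)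
    rw [this, h0, hL0]; simp
  refine ⟨fun z => Complex.exp (L z / 2), ?_, by simp [hL0], ?_⟩
  · intro z hz
    exact ((hL z hz).div_const 2).cexp.differentiableAt.differentiableWithinAt
  · intro z hz
    have := hconst z hz
    rw [Complex.exp_neg, mul_inv_eq_one₀ (Complex.exp_ne_zero _)] at this
    rw [this, ← Complex.exp_nat_mul]
    congr 1; push_cast; ring

open Set Filter Topology in
theorem K_koebe (φ : ℂ → ℂ) (hd : DifferentiableOn ℂ φ (ball 0 1)) (hi : InjOn φ (ball 0 1))
    {w : ℂ} (hw : w ∉ φ '' ball 0 1) : (1 / 4) * ‖deriv φ 0‖ ≤ dist (φ 0) w := by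
  have hb0 : (0:ℂ) ∈ ball (0:ℂ) 1 := by simp
  have hw0 : w - φ 0 ≠ 0 := fun h => hw ⟨0, hb0, (sub_eq_zero.1 h).symm⟩
  obtain ⟨p, hpd, hp0, hp⟩ := K_sqrt (f := fun z => (w - φ z) / (w - φ 0))
    ((hd.const_sub w).div_const _) (by simp [hw0])
    (fun z hz => div_ne_zero (fun h => hw ⟨z, hz, (sub_eq_zero.1 h).symm⟩) hw0)
  have hsq : ∀ z ∈ ball (0:ℂ) 1, ∀ z' ∈ ball (0:ℂ) 1, p z ^ 2 = p z' ^ 2 → z = z' := by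
    intro z hz z' hz' h
    rw [hp z hz, hp z' hz', div_left_inj' hw0, sub_right_inj] at h
    exact hi hz hz' h
  have hpne : ∀ z ∈ ball (0:ℂ) 1, p z ≠ 0 := by
    intro z hz h
    have := hp z hz
    rw [h, zero_pow two_ne_zero, eq_comm, div_eq_zero_iff] at this
    exact this.elim (fun h => hw ⟨z, hz, (sub_eq_zero.1 h).symm⟩) hw0
  have hadd : ∀ z ∈ ball (0:ℂ) 1, ∀ z' ∈ ball (0:ℂ) 1, p z + p z' ≠ 0 := by
    intro z hz z' hz' h
    have h1 : p z = - p z' := eq_neg_of_add_eq_zero_left h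
    have := hsq z hz z' hz' (by rw [h1]; ring)
    subst this
    exact hpne z hz (by linear_combination h / 2)
  have h1p : ∀ z ∈ ball (0:ℂ) 1, 1 + p z ≠ 0 := fun z hz => by
    rw [← hp0]; exact hadd 0 hb0 z hz
  have key := K_BE (fun z => (1 - p z) / (1 + p z))
    ((hpd.const_sub 1).div (hpd.const_add 1) h1p) ?_ (by simp [hp0]) ?_
  · have hpD : HasDerivAt p (deriv p 0) 0 :=
      (hpd.differentiableAt (isOpen_ball.mem_nhds hb0)).hasDerivAt
    have hφD : HasDerivAt φ (deriv φ 0) 0 :=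
      (hd.differentiableAt (isOpen_ball.mem_nhds hb0)).hasDerivAt
    have e1 := ((hpD.const_sub 1).div (hpD.const_add 1) (h1p 0 hb0)).deriv
    have e2 : deriv (fun z => p z ^ 2) 0 = deriv (fun z => (w - φ z) / (w - φ 0)) 0 := by
      apply Filter.EventuallyEq.deriv_eq
      filter_upwards [isOpen_ball.mem_nhds hb0] with z hz using hp z hz
    rw [(show HasDerivAt (fun z => p z ^ 2) _ 0 from hpD.pow 2).deriv, ((hφD.const_sub w).div_const _).deriv, hp0] at e2
    have e3 : deriv (fun z => (1 - p z) / (1 + p z)) 0 = deriv φ 0 / (4 * (w - φ 0)) := by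
      refine e1.trans ?_
      rw [hp0]
      have : deriv p 0 = - deriv φ 0 / (w - φ 0) / 2 := by
        rw [← e2]; push_cast; ring
      rw [this]
      field_simp
      ring
    rw [e3, norm_div, norm_mul, div_le_one (by have := norm_pos_iff.2 hw0; simp [this])] at key
    rw [dist_comm, dist_eq_norm]
    simp at key
    linarith
  · intro z hz z' hz' h
    simp only at h
    rw [div_eq_div_iff (h1p z hz) (h1p z' hz')] at h
    exact hsq z hz z' hz' (by rw [show p z = p z' by linear_combination -h / 2])
  · intro z hz z' hz' h
    rw [div_mul_div_comm, div_eq_one_iff_eq (mul_ne_zero (h1p z hz) (h1p z' hz'))] at h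
    exact hadd z hz z' hz' (by linear_combination -h / 2)

/-- Lemma 2.2 of the paper: for an (H,α)-Hölder univalent map on the disk,
`|φ'(0)|`, `dist(φ(0), ∂U)` and `diam U` are comparable. -/
theorem holder_domain_comparability (φ : ℂ → ℂ) (H α : ℝ)
    (hH : 0 < H) (hα : 0 < α) (hα1 : α ≤ 1)
    (hdiff : DifferentiableOn ℂ φ (ball (0 : ℂ) 1))
    (hinj : Set.InjOn φ (ball (0 : ℂ) 1))
    (hHol : ∀ z₁ ∈ ball (0 : ℂ) 1, ∀ z₂ ∈ ball (0 : ℂ) 1,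
      ‖φ z₁ - φ z₂‖ ≤ H * ‖deriv φ 0‖ * ‖z₁ - z₂‖ ^ α) :
    (1 / 4) * ‖deriv φ 0‖ ≤ infDist (φ 0) (frontier (φ '' ball (0 : ℂ) 1)) ∧
    infDist (φ 0) (frontier (φ '' ball (0 : ℂ) 1)) ≤ diam (φ '' ball (0 : ℂ) 1) ∧
    diam (φ '' ball (0 : ℂ) 1) ≤ (2 : ℝ) ^ α * H * ‖deriv φ 0‖ := by
  have hb0 : (0:ℂ) ∈ ball (0:ℂ) 1 := by simp
  have hbd : ∀ x ∈ φ '' ball (0 : ℂ) 1, ∀ y ∈ φ '' ball (0 : ℂ) 1,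
      dist x y ≤ (2 : ℝ) ^ α * H * ‖deriv φ 0‖ := by
    rintro _ ⟨z, hz, rfl⟩ _ ⟨w, hw, rfl⟩
    rw [dist_eq_norm]
    have h1 : ‖z - w‖ ≤ 2 := by
      have := norm_sub_le z w
      rw [mem_ball_zero_iff] at hz hw
      linarith
    have h2 : ‖z - w‖ ^ α ≤ 2 ^ α := Real.rpow_le_rpow (norm_nonneg _) h1 hα.le
    calc _ ≤ _ := hHol z hz w hw
      _ ≤ H * ‖deriv φ 0‖ * 2 ^ α := by gcongr
      _ = _ := by ring
  have hB : Bornology.IsBounded (φ '' ball (0 : ℂ) 1) := Metric.isBounded_iff.2 ⟨_, hbd⟩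
  have hmem : φ 0 ∈ φ '' ball (0 : ℂ) 1 := ⟨0, hb0, rfl⟩
  have hfr : (frontier (φ '' ball (0 : ℂ) 1)).Nonempty := by
    rw [nonempty_frontier_iff]
    refine ⟨⟨_, hmem⟩, fun h => ?_⟩
    rw [h] at hB
    exact NormedSpace.unbounded_univ ℂ ℂ hB
  have hopen : IsOpen (φ '' ball (0 : ℂ) 1) := by
    have han : AnalyticOnNhd ℂ φ (ball 0 1) := hdiff.analyticOnNhd isOpen_ball
    rcases han.is_constant_or_isOpen (convex_ball (0:ℂ) 1).isPreconnected with ⟨w, hw⟩ | h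
    · exfalso
      have hb1 : (1/2:ℂ) ∈ ball (0:ℂ) 1 := by simp; norm_num
      have := hinj hb0 hb1 ((hw _ hb0).trans (hw _ hb1).symm)
      norm_num at this
    · exact h _ subset_rfl isOpen_ball
  refine ⟨?_, ?_, ?_⟩
  · rw [le_infDist hfr]
    intro w hw
    apply K_koebe φ hdiff hinj
    rw [hopen.frontier_eq] at hw
    exact hw.2
  · obtain ⟨w, hw⟩ := hfr
    refine (infDist_le_dist_of_mem hw).trans ?_
    rw [← Metric.diam_closure]
    exact dist_le_diam_of_mem hB.closure (subset_closure hmem) (frontier_subset_closure hw)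
  · exact diam_le_of_forall_dist_le (by positivity) hbd
end

section
/- For R > 0 let Q_R = {z ∈ ℂ : 0 < Re z < 2R and −R < Im z < R}. Let φ : ℂ → ℂ be holomorphic and injective on the right half-plane ℍ = {z ∈ ℂ : Re z > 0}, let H > 0 and 0 < α ≤ 1, and suppose that for every T ≥ 1 one has |φ(T·w₁) − φ(T·w₂)| ≤ H·T·|φ′(T)|·|w₁ − w₂|^α for all w₁, w₂ ∈ Q₁. Then for every real R ≥ e one has |φ(log R)| ≤ |φ(1)| + 16H·|φ′(1)|·(log R)². -/
open Complex

/-- The half-open square `Q_R = {0 < Re z < 2R, -R < Im z < R}`. -/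
def Qsq (R : ℝ) : Set ℂ :=
  {z : ℂ | 0 < z.re ∧ z.re < 2 * R ∧ -R < z.im ∧ z.im < R}

theorem aux_deriv_ne_zero {f : ℂ → ℂ} {U : Set ℂ} {z₀ : ℂ} (hU : U ∈ nhds z₀)
    (hf : AnalyticAt ℂ f z₀) (hinj : Set.InjOn f U) : deriv f z₀ ≠ 0 := by
  have hne : ¬ ∀ᶠ z in nhds z₀, f z - f z₀ = 0 := by
    intro h
    have h2 : ∀ᶠ z in nhds z₀, z = z₀ := by
      filter_upwards [h, hU] with z hz hzU
      exact hinj hzU (mem_of_mem_nhds hU) (sub_eq_zero.1 hz)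
    have h3 : ({z₀} : Set ℂ) ∈ nhds z₀ := h2
    exact not_isOpen_singleton z₀ (isOpen_iff_mem_nhds.2 (by rintro _ rfl; exact h3))
  obtain ⟨n, g, hg, hg0, hfg⟩ :=
    ((hf.sub analyticAt_const).exists_eventuallyEq_pow_smul_nonzero_iff (f := fun z => f z - f z₀)).2 hne
  have hn0 : n ≠ 0 := by
    rintro rfl
    have := hfg.self_of_nhds
    simp at this
    exact hg0 this.symm
  set h : ℂ → ℂ := fun z => (z - z₀) * (g z / g z₀) ^ ((1 : ℂ) / n) with hh
  have hsl : g z₀ / g z₀ ∈ slitPlane := by rw [div_self hg0]; exact one_mem_slitPlane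
  have hk : AnalyticAt ℂ (fun z => (g z / g z₀) ^ ((1 : ℂ) / n)) z₀ :=
    (hg.div analyticAt_const hg0).cpow analyticAt_const hsl
  have hhan : AnalyticAt ℂ h z₀ := (analyticAt_id.sub analyticAt_const).mul hk
  have hhd : deriv h z₀ = 1 := by
    have h1 := ((hasDerivAt_id z₀).sub_const z₀).mul hk.differentiableAt.hasDerivAt
    have h2 := h1.deriv
    simp only [id, sub_self, zero_mul, add_zero, one_mul, div_self hg0, one_cpow] at h2
    exact h2
  have hst : HasStrictDerivAt h 1 z₀ := by
    have := hhan.hasStrictDerivAt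
    rwa [hhd] at this
  have hmap := hst.map_nhds_eq one_ne_zero
  have hh0 : h z₀ = 0 := by simp [hh]
  rw [hh0] at hmap
  by_cases hn1 : n = 1
  · subst hn1
    have e : (fun z => f z - f z₀) =ᶠ[nhds z₀] fun z => (z - z₀) * g z := by
      filter_upwards [hfg] with z hz
      simpa using hz
    have h1 := ((hasDerivAt_id z₀).sub_const z₀).mul hg.differentiableAt.hasDerivAt
    have h2 := h1.deriv
    have h3 := e.deriv_eq
    rw [deriv_sub_const_fun] at h3
    rw [h3]
    have h4 : deriv (fun z => (z - z₀) * g z) z₀ = g z₀ := by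
      simp only [id, sub_self, zero_mul, add_zero, one_mul] at h2
      exact h2
    rw [h4]; exact hg0
  exfalso
  have hV : {z | z ∈ U ∧ f z - f z₀ = (z - z₀) ^ n • g z} ∈ nhds z₀ := Filter.inter_mem hU hfg
  have himg := Filter.image_mem_map (m := h) hV
  rw [hmap] at himg
  obtain ⟨ε, hε, hball⟩ := Metric.mem_nhds_iff.1 himg
  have hprim := Complex.isPrimitiveRoot_exp n hn0
  set ω := Complex.exp (2 * Real.pi * I / n) with hω
  have hωn : ω ^ n = 1 := hprim.pow_eq_one
  have hω1 : ω ≠ 1 := hprim.ne_one (by omega)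
  have hωnorm : ‖ω‖ = 1 := norm_eq_one_of_pow_eq_one hωn hn0
  have m1 : ((ε / 2 : ℝ) : ℂ) ∈ Metric.ball (0 : ℂ) ε := by
    rw [mem_ball_zero_iff, Complex.norm_real, Real.norm_eq_abs, abs_of_pos (by positivity)]; linarith
  have m2 : ω * ((ε / 2 : ℝ) : ℂ) ∈ Metric.ball (0 : ℂ) ε := by
    rw [mem_ball_zero_iff, norm_mul, hωnorm, Complex.norm_real, Real.norm_eq_abs, abs_of_pos (by positivity)]; linarith
  obtain ⟨z1, ⟨hz1, e1⟩, k1⟩ := hball m1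
  obtain ⟨z2, ⟨hz2, e2⟩, k2⟩ := hball m2
  have hpow : ∀ z, h z ^ n * g z₀ = (z - z₀) ^ n • g z := by
    intro z
    simp only [hh, mul_pow, one_div, Complex.cpow_nat_inv_pow _ hn0, smul_eq_mul]
    field_simp
  have : z1 = z2 := by
    apply hinj hz1 hz2
    have : f z1 - f z₀ = f z2 - f z₀ := by
      rw [e1, e2, ← hpow, ← hpow, k1, k2, mul_pow, hωn, one_mul]
    linear_combination this
  rw [← this, k1] at k2
  have h5 : ((ε / 2 : ℝ) : ℂ) ≠ 0 := by
    rw [Ne, Complex.ofReal_eq_zero]; positivity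
  apply hω1
  have : (1 - ω) * ((ε / 2 : ℝ) : ℂ) = 0 := by linear_combination k2
  rcases mul_eq_zero.1 this with h | h
  · linear_combination -h
  · exact absurd h h5

theorem aux_circle {q : ℂ → ℂ} (hq : DifferentiableOn ℂ q (Metric.ball 0 1)) (hq0 : q 0 = 1)
    {s : ℝ} (hs : 0 < s) (hs1 : s < 1) :
    2 * Real.pi * (1 / s ^ 4 + ‖deriv q 0‖ ^ 2) ≤
      ∫ θ in (-Real.pi)..Real.pi, ‖-q ((circleMap 0 s θ) ^ 2) / (circleMap 0 s θ) ^ 2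
        + 2 * deriv q ((circleMap 0 s θ) ^ 2)‖ ^ 2 := by
  set b := deriv q 0 with hb
  have hnb : Metric.ball (0 : ℂ) 1 ∈ nhds 0 := Metric.ball_mem_nhds _ one_pos
  have hm : DifferentiableOn ℂ (dslope q 0) (Metric.ball 0 1) :=
    (Complex.differentiableOn_dslope hnb).2 hq
  have hq' : DifferentiableOn ℂ (deriv q) (Metric.ball 0 1) := hq.deriv Metric.isOpen_ball
  have hsq : Set.MapsTo (fun z : ℂ => z ^ 2) (Metric.ball 0 1) (Metric.ball 0 1) := by
    intro z hz
    rw [mem_ball_zero_iff] at *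
    rw [norm_pow]
    exact pow_lt_one₀ (norm_nonneg _) hz two_ne_zero
  set e : ℂ → ℂ := fun z => -dslope q 0 (z ^ 2) + 2 * deriv q (z ^ 2) - b with he
  have hed : DifferentiableOn ℂ e (Metric.ball 0 1) := by
    have p2 : DifferentiableOn ℂ (fun z : ℂ => z ^ 2) (Metric.ball 0 1) := by fun_prop
    have h1 : DifferentiableOn ℂ (fun z => dslope q 0 (z ^ 2)) (Metric.ball 0 1) := hm.comp p2 hsq
    have h2 : DifferentiableOn ℂ (fun z => deriv q (z ^ 2)) (Metric.ball 0 1) := hq'.comp p2 hsq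
    exact (h1.neg.add (h2.const_mul 2)).sub_const b
  have he0 : e 0 = 0 := by simp [he, hb]; ring
  set Φ : ℂ → ℂ := fun z => (-2 * b * z ^ 2 / s ^ 4 + 2 * e z * (-z ^ 2 / s ^ 4 + starRingEnd ℂ b))
    + (1 / s ^ 4 + ‖b‖ ^ 2 : ℝ) with hΦ
  have hΦd : DifferentiableOn ℂ Φ (Metric.ball 0 1) := by
    have : DifferentiableOn ℂ (fun z : ℂ => -z ^ 2 / (s:ℂ) ^ 4 + starRingEnd ℂ b) (Metric.ball 0 1) := by
      fun_prop
    have h2 : DifferentiableOn ℂ (fun z : ℂ => -2 * b * z ^ 2 / (s:ℂ) ^ 4) (Metric.ball 0 1) := by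
      fun_prop
    exact (h2.add ((hed.const_mul 2).mul this)).add_const _
  have hav : Real.circleAverage Φ 0 s = (1 / s ^ 4 + ‖b‖ ^ 2 : ℝ) := by
    have hd : DiffContOnCl ℂ Φ (Metric.ball 0 |s|) := by
      rw [abs_of_pos hs]
      apply hΦd.diffContOnCl_ball
      exact Metric.closedBall_subset_ball hs1
    rw [hd.circleAverage]
    simp [hΦ, he0]
  have hmem : ∀ θ, circleMap 0 s θ ∈ Metric.ball (0:ℂ) 1 := by
    intro θ; rw [mem_ball_zero_iff, norm_circleMap_zero, abs_of_pos hs]; exact hs1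
  have hcc : Continuous (fun θ => Φ (circleMap 0 s θ)) :=
    hΦd.continuousOn.comp_continuous (continuous_circleMap 0 s) hmem
  have hne : ∀ θ, circleMap 0 s θ ≠ 0 := fun θ => circleMap_ne_center hs.ne'
  have hGc : Continuous (fun θ => ‖-q ((circleMap 0 s θ) ^ 2) / (circleMap 0 s θ) ^ 2
        + 2 * deriv q ((circleMap 0 s θ) ^ 2)‖ ^ 2) := by
    have c1 : Continuous (fun θ => q ((circleMap 0 s θ) ^ 2)) :=
      hq.continuousOn.comp_continuous ((continuous_circleMap 0 s).pow 2) (fun θ => hsq (hmem θ))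
    have c2 : Continuous (fun θ => deriv q ((circleMap 0 s θ) ^ 2)) :=
      hq'.continuousOn.comp_continuous ((continuous_circleMap 0 s).pow 2) (fun θ => hsq (hmem θ))
    exact (((c1.neg.div ((continuous_circleMap 0 s).pow 2) (fun θ => pow_ne_zero 2 (hne θ))).add
      (c2.const_mul 2)).norm).pow 2
  have hint : ∫ θ in (-Real.pi)..Real.pi, (Φ (circleMap 0 s θ)).re =
      2 * Real.pi * (1 / s ^ 4 + ‖b‖ ^ 2) := by
    have h1 : ∫ θ in (-Real.pi)..Real.pi, Φ (circleMap 0 s θ) =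
        ((2 * Real.pi * (1 / s ^ 4 + ‖b‖ ^ 2) : ℝ) : ℂ) := by
      have hper : Function.Periodic (fun θ => Φ (circleMap 0 s θ)) (2 * Real.pi) :=
        fun θ => by simp only [periodic_circleMap 0 s θ]
      have := hper.intervalIntegral_add_eq (-Real.pi) 0
      rw [show -Real.pi + 2 * Real.pi = Real.pi by ring, zero_add] at this
      rw [this]
      rw [Real.circleAverage_def] at hav
      rw [inv_smul_eq_iff₀ (by positivity)] at hav
      rw [hav]
      simp
      ring
    have h2 := Complex.reCLM.intervalIntegral_comp_comm (hcc.intervalIntegrable (μ := MeasureTheory.volume) (-Real.pi) Real.pi)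
    simp only [Complex.reCLM_apply] at h2
    rw [h2, h1, Complex.ofReal_re]
  rw [← hint]
  apply intervalIntegral.integral_mono (by linarith [Real.pi_pos])
  · exact (Complex.continuous_re.comp hcc).intervalIntegrable _ _
  · exact hGc.intervalIntegrable _ _
  intro θ
  set z := circleMap 0 s θ with hz
  have hz0 : z ≠ 0 := hne θ
  have hzn : ‖z‖ = s := by rw [hz, norm_circleMap_zero, abs_of_pos hs]
  have hzz : starRingEnd ℂ z * z = (s:ℂ) ^ 2 := by
    rw [mul_comm, Complex.mul_conj, Complex.normSq_eq_norm_sq, hzn]; push_cast; rfl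
  have hG : -q (z ^ 2) / z ^ 2 + 2 * deriv q (z ^ 2) = (-1 / z ^ 2 + b) + e z := by
    simp only [he]
    rw [dslope_of_ne _ (pow_ne_zero 2 hz0), slope_def_field, hq0]
    field_simp
    ring
  have hs0 : (s : ℂ) ≠ 0 := by exact_mod_cast hs.ne'
  have hcz : starRingEnd ℂ z ≠ 0 := by simpa using hz0
  have hcP : starRingEnd ℂ (-1 / z ^ 2 + b) = -z ^ 2 / s ^ 4 + starRingEnd ℂ b := by
    simp only [map_add, map_div₀, map_neg, map_one, map_pow]
    congr 1
    rw [div_eq_div_iff (pow_ne_zero 2 hcz) (pow_ne_zero 4 hs0)]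
    rw [show (s:ℂ) ^ 4 = (s ^ 2) ^ 2 by ring, ← hzz]; ring
  change (Φ z).re ≤ ‖-q (z ^ 2) / z ^ 2 + 2 * deriv q (z ^ 2)‖ ^ 2
  rw [hG]
  have key : Φ z = (-1 / z ^ 2 + b) * starRingEnd ℂ (-1 / z ^ 2 + b) + 2 * (e z * starRingEnd ℂ (-1 / z ^ 2 + b))
      + (starRingEnd ℂ b / z ^ 2 - starRingEnd ℂ (starRingEnd ℂ b / z ^ 2)) := by
    have hcb : starRingEnd ℂ (starRingEnd ℂ b / z ^ 2) = b * z ^ 2 / s ^ 4 := by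
      simp only [map_div₀, map_pow, Complex.conj_conj]
      rw [div_eq_div_iff (pow_ne_zero 2 hcz) (pow_ne_zero 4 hs0)]
      rw [show (s:ℂ) ^ 4 = (s ^ 2) ^ 2 by ring, ← hzz]; ring
    have hbb : ((‖b‖ ^ 2 : ℝ) : ℂ) = b * starRingEnd ℂ b := by
      rw [Complex.mul_conj, Complex.normSq_eq_norm_sq]
    rw [hcb, hcP]
    simp only [hΦ]
    rw [Complex.ofReal_add, hbb]
    push_cast
    field_simp
    ring
  rw [key, Complex.add_re, Complex.add_re, Complex.mul_conj, Complex.ofReal_re]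
  rw [Complex.sub_re, Complex.conj_re, sub_self, add_zero]
  rw [← Complex.normSq_eq_norm_sq, Complex.normSq_add (-1 / z ^ 2 + b)]
  have h5 : ((-1 / z ^ 2 + b) * starRingEnd ℂ (e z)).re = (e z * starRingEnd ℂ (-1 / z ^ 2 + b)).re := by
    rw [← Complex.conj_re]; simp only [map_mul, Complex.conj_conj]; rw [mul_comm]
  rw [h5]
  have h6 : (2 * (e z * starRingEnd ℂ (-1 / z ^ 2 + b))).re = 2 * (e z * starRingEnd ℂ (-1 / z ^ 2 + b)).re := by
    simp
  rw [h6]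
  have := Complex.normSq_nonneg (e z)
  linarith

theorem aux_area_lower {q : ℂ → ℂ} (hq : DifferentiableOn ℂ q (Metric.ball 0 1)) (hq0 : q 0 = 1)
    {r ρ : ℝ} (hr : 0 < r) (hrρ : r < ρ) (hρ : ρ < 1) :
    ENNReal.ofReal (Real.pi * (1 / r ^ 2 - 1 / ρ ^ 2 + ‖deriv q 0‖ ^ 2 * (ρ ^ 2 - r ^ 2))) ≤
      ∫⁻ z in {z : ℂ | r < ‖z‖ ∧ ‖z‖ < ρ},
        ENNReal.ofReal (‖-q (z ^ 2) / z ^ 2 + 2 * deriv q (z ^ 2)‖ ^ 2) := by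
  set b := deriv q 0 with hb
  set G : ℂ → ℝ := fun z => ‖-q (z ^ 2) / z ^ 2 + 2 * deriv q (z ^ 2)‖ ^ 2 with hG
  set A : Set ℂ := {z : ℂ | r < ‖z‖ ∧ ‖z‖ < ρ} with hA
  have hAo : IsOpen A := (isOpen_lt continuous_const continuous_norm).inter
    (isOpen_lt continuous_norm continuous_const)
  have hq' : DifferentiableOn ℂ (deriv q) (Metric.ball 0 1) := hq.deriv Metric.isOpen_ball
  have hsq : Set.MapsTo (fun z : ℂ => z ^ 2) (Metric.ball 0 1) (Metric.ball 0 1) := by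
    intro z hz
    rw [mem_ball_zero_iff] at *
    rw [norm_pow]
    exact pow_lt_one₀ (norm_nonneg _) hz two_ne_zero
  have hGc : ContinuousOn G (Metric.ball 0 1 \ {0}) := by
    have p2 : ContinuousOn (fun z : ℂ => z ^ 2) (Metric.ball 0 1) := by fun_prop
    have c1 : ContinuousOn (fun z => q (z ^ 2)) (Metric.ball 0 1) := hq.continuousOn.comp p2 hsq
    have c2 : ContinuousOn (fun z => deriv q (z ^ 2)) (Metric.ball 0 1) := hq'.continuousOn.comp p2 hsq
    refine ((((c1.mono Set.sdiff_subset).neg.div (p2.mono Set.sdiff_subset) ?_).add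
      ((c2.mono Set.sdiff_subset).const_mul 2)).norm).pow 2
    rintro z ⟨_, hz⟩
    exact pow_ne_zero 2 hz
  rw [← MeasureTheory.lintegral_indicator hAo.measurableSet, ← Complex.lintegral_comp_polarCoord_symm]
  have hpc : ∀ p : ℝ × ℝ, Complex.polarCoord.symm p = circleMap 0 p.1 p.2 := by
    intro p
    rw [Complex.polarCoord_symm_apply, circleMap_zero, Complex.exp_mul_I]
    push_cast; rfl
  have hsub : Set.Ioo r ρ ×ˢ Set.Ioc (-Real.pi) Real.pi ∩ polarCoord.target = Set.Ioo r ρ ×ˢ Set.Ioo (-Real.pi) Real.pi := by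
    ext ⟨x, y⟩
    simp only [polarCoord_target, Set.mem_inter_iff, Set.mem_prod, Set.mem_Ioo, Set.mem_Ioc, Set.mem_Ioi]
    constructor
    · rintro ⟨⟨h1, h2⟩, h3, h4⟩; exact ⟨h1, h4⟩
    · rintro ⟨h1, h2⟩; exact ⟨⟨h1, h2.1, h2.2.le⟩, hr.trans h1.1, h2⟩
  set F : ℝ → ℝ → ENNReal := fun x y => ENNReal.ofReal (x * G (circleMap 0 x y)) with hF
  have hFm : AEMeasurable (fun p : ℝ × ℝ => F p.1 p.2)
      ((MeasureTheory.volume.restrict (Set.Ioo r ρ)).prod (MeasureTheory.volume.restrict (Set.Ioo (-Real.pi) Real.pi))) := by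
    rw [MeasureTheory.Measure.prod_restrict]
    apply AEMeasurable.ennreal_ofReal
    apply ContinuousOn.aemeasurable _ (measurableSet_Ioo.prod measurableSet_Ioo)
    apply continuousOn_fst.mul
    apply hGc.comp
    · have : Continuous (fun p : ℝ × ℝ => circleMap 0 p.1 p.2) := by
        unfold circleMap; fun_prop
      exact this.continuousOn
    · rintro ⟨x, y⟩ ⟨⟨h1, h2⟩, -⟩
      simp only at h1 h2
      have hx : 0 < x := hr.trans h1
      refine ⟨?_, circleMap_ne_center hx.ne'⟩
      rw [mem_ball_zero_iff, norm_circleMap_zero, abs_of_pos hx]; linarith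
  calc ENNReal.ofReal (Real.pi * (1 / r ^ 2 - 1 / ρ ^ 2 + ‖b‖ ^ 2 * (ρ ^ 2 - r ^ 2)))
      ≤ ∫⁻ x in Set.Ioo r ρ, ENNReal.ofReal (x * (2 * Real.pi * (1 / x ^ 4 + ‖b‖ ^ 2))) := by
        have hI : ∫ x in r..ρ, (x * (2 * Real.pi * (1 / x ^ 4 + ‖b‖ ^ 2))) =
            Real.pi * (1 / r ^ 2 - 1 / ρ ^ 2 + ‖b‖ ^ 2 * (ρ ^ 2 - r ^ 2)) := by
          have : ∀ x ∈ Set.uIcc r ρ, HasDerivAt (fun x : ℝ => Real.pi * (-(1 / x ^ 2) + ‖b‖ ^ 2 * x ^ 2))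
              (x * (2 * Real.pi * (1 / x ^ 4 + ‖b‖ ^ 2))) x := by
            intro x hx
            rw [Set.uIcc_of_le hrρ.le] at hx
            have hx0 : x ≠ 0 := (hr.trans_le hx.1).ne'
            have h1 := (((hasDerivAt_pow 2 x).inv (pow_ne_zero 2 hx0)).neg.add
              ((hasDerivAt_pow 2 x).const_mul (‖b‖ ^ 2))).const_mul Real.pi
            have h2 := h1.congr_deriv (g' := x * (2 * Real.pi * (1 / x ^ 4 + ‖b‖ ^ 2))) (by
              simp only [Nat.cast_ofNat, Nat.add_one_sub_one, pow_one]; field_simp)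
            exact HasDerivAt.congr_of_eventuallyEq h2 (.of_forall fun y => by simp)
          rw [intervalIntegral.integral_eq_sub_of_hasDerivAt this]
          · ring
          · apply ContinuousOn.intervalIntegrable
            intro x hx
            rw [Set.uIcc_of_le hrρ.le] at hx
            have hx0 : x ≠ 0 := (hr.trans_le hx.1).ne'
            apply ContinuousAt.continuousWithinAt
            have : x ^ 4 ≠ 0 := pow_ne_zero 4 hx0
            fun_prop (disch := assumption)
        rw [← hI, intervalIntegral.integral_of_le hrρ.le, MeasureTheory.integral_Ioc_eq_integral_Ioo,
          MeasureTheory.ofReal_integral_eq_lintegral_ofReal]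
        · apply (ContinuousOn.integrableOn_Icc _).mono_set Set.Ioo_subset_Icc_self
          intro x hx
          have hx0 : x ≠ 0 := (hr.trans_le hx.1).ne'
          apply ContinuousAt.continuousWithinAt
          have : x ^ 4 ≠ 0 := pow_ne_zero 4 hx0
          fun_prop (disch := assumption)
        · filter_upwards [MeasureTheory.ae_restrict_mem measurableSet_Ioo] with x hx
          have : 0 < x := hr.trans hx.1
          have := Real.pi_pos
          simp only [Pi.zero_apply]
          positivity
    _ ≤ ∫⁻ x in Set.Ioo r ρ, ∫⁻ y in Set.Ioo (-Real.pi) Real.pi, F x y := by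
        apply MeasureTheory.setLIntegral_mono' measurableSet_Ioo
        intro x hx
        have hx0 : 0 < x := hr.trans hx.1
        have hxρ : x < 1 := hx.2.trans hρ
        have hc : Continuous (fun y => x * G (circleMap 0 x y)) := by
          apply continuous_const.mul
          apply hGc.comp_continuous (continuous_circleMap 0 x)
          intro y
          refine ⟨?_, circleMap_ne_center hx0.ne'⟩
          rw [mem_ball_zero_iff, norm_circleMap_zero, abs_of_pos hx0]; linarith
        simp only [hF]
        rw [← MeasureTheory.ofReal_integral_eq_lintegral_ofReal]
        · apply ENNReal.ofReal_le_ofReal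
          rw [← MeasureTheory.integral_Ioc_eq_integral_Ioo, ← intervalIntegral.integral_of_le
            (by linarith [Real.pi_pos]), intervalIntegral.integral_const_mul]
          exact mul_le_mul_of_nonneg_left (aux_circle hq hq0 hx0 hxρ) hx0.le
        · exact (hc.continuousOn.integrableOn_Icc).mono_set Set.Ioo_subset_Icc_self
        · filter_upwards with y
          simp only [Pi.zero_apply, hG]
          positivity
    _ = ∫⁻ p in Set.Ioo r ρ ×ˢ Set.Ioo (-Real.pi) Real.pi, F p.1 p.2 := by
        rw [MeasureTheory.Measure.volume_eq_prod, ← MeasureTheory.Measure.prod_restrict,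
          MeasureTheory.lintegral_prod _ hFm]
    _ ≤ ∫⁻ p in Set.Ioo r ρ ×ˢ Set.Ioo (-Real.pi) Real.pi, ENNReal.ofReal p.1 • A.indicator (fun z => ENNReal.ofReal (G z)) (Complex.polarCoord.symm p) := by
        apply MeasureTheory.setLIntegral_mono' (measurableSet_Ioo.prod measurableSet_Ioo)
        rintro ⟨x, y⟩ ⟨⟨h1, h2⟩, -⟩
        simp only at h1 h2
        have hx : 0 < x := hr.trans h1
        rw [hpc, Set.indicator_of_mem, smul_eq_mul, ← ENNReal.ofReal_mul hx.le]
        simp only [hA, Set.mem_ofPred_eq, norm_circleMap_zero, abs_of_pos hx]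
        exact ⟨h1, h2⟩
    _ ≤ _ := by
        apply MeasureTheory.lintegral_mono_set
        rw [← hsub]
        exact Set.inter_subset_right

theorem aux_det (c : ℂ) : LinearMap.det (LinearMap.id - (LinearMap.mulLeft ℝ c) ∘ₗ (Complex.conjAe.toLinearMap)) = 1 - ‖c‖ ^ 2 := by
  rw [← LinearMap.det_toMatrix Complex.basisOneI, Matrix.det_fin_two]
  simp [LinearMap.toMatrix_apply, ← Complex.normSq_eq_norm_sq, Complex.normSq_apply]
  ring

theorem aux_area_upper {q : ℂ → ℂ} (hq : DifferentiableOn ℂ q (Metric.ball 0 1))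
    (hinj : Set.InjOn (fun z => q (z ^ 2) / z) (Metric.ball 0 1 \ {0})) (c : ℂ)
    {r ρ M : ℝ} (hr : 0 < r) (hρ : ρ < 1) (hM : 0 ≤ M)
    (hb : ∀ z : ℂ, r < ‖z‖ → ‖z‖ < ρ → ‖q (z ^ 2) / z - c * starRingEnd ℂ (q (z ^ 2) / z)‖ ≤ M) :
    ENNReal.ofReal |1 - ‖c‖ ^ 2| * ∫⁻ z in {z : ℂ | r < ‖z‖ ∧ ‖z‖ < ρ},
        ENNReal.ofReal (‖-q (z ^ 2) / z ^ 2 + 2 * deriv q (z ^ 2)‖ ^ 2) ≤ ENNReal.ofReal (Real.pi * M ^ 2) := by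
  set A : Set ℂ := {z : ℂ | r < ‖z‖ ∧ ‖z‖ < ρ} with hA
  have hAo : IsOpen A := (isOpen_lt continuous_const continuous_norm).inter
    (isOpen_lt continuous_norm continuous_const)
  have hAs : A ⊆ Metric.ball 0 1 \ {0} := by
    rintro z ⟨h1, h2⟩
    refine ⟨by rw [mem_ball_zero_iff]; linarith, ?_⟩
    rintro rfl
    simp at h1; linarith
  have hd : ∀ z ∈ A, HasDerivAt (fun z => q (z ^ 2) / z) (-q (z ^ 2) / z ^ 2 + 2 * deriv q (z ^ 2)) z := by
    intro z hz
    obtain ⟨hz1, hz0⟩ := hAs hz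
    have hz0' : z ≠ 0 := hz0
    have h2 : z ^ 2 ∈ Metric.ball (0:ℂ) 1 := by
      rw [mem_ball_zero_iff] at *
      rw [norm_pow]
      exact pow_lt_one₀ (norm_nonneg _) hz1 two_ne_zero
    have h3 := (hq.differentiableAt (Metric.isOpen_ball.mem_nhds h2)).hasDerivAt
    have h4 : HasDerivAt (fun z : ℂ => z ^ 2) (2 * z) z := by simpa using hasDerivAt_pow 2 z
    have h5 := (HasDerivAt.comp z h3 h4).div (hasDerivAt_id z) hz0'
    refine (h5.congr_deriv ?_).congr_of_eventuallyEq (.of_forall fun y => rfl)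
    simp only [Function.comp_def, id]
    field_simp
    ring
  have hcv := MeasureTheory.lintegral_abs_det_fderiv_eq_addHaar_image MeasureTheory.volume hAo.measurableSet
    (fun z hz => ((hd z hz).hasFDerivAt.restrictScalars ℝ).hasFDerivWithinAt (s := A)) (hinj.mono hAs)
  have hdet : ∀ w : ℂ, (ContinuousLinearMap.restrictScalars ℝ (ContinuousLinearMap.toSpanSingleton ℂ w)).det = ‖w‖ ^ 2 := by
    intro w
    simp [ContinuousLinearMap.det, LinearMap.det_restrictScalars,
      Algebra.norm_complex_eq, Complex.normSq_eq_norm_sq]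
  have hcv2 : ∫⁻ z in A, ENNReal.ofReal (‖-q (z ^ 2) / z ^ 2 + 2 * deriv q (z ^ 2)‖ ^ 2) =
      MeasureTheory.volume ((fun z => q (z ^ 2) / z) '' A) := by
    rw [← hcv]
    congr 1
    funext z
    rw [hdet, abs_of_nonneg (by positivity)]
  rw [hcv2, ← aux_det c, ← MeasureTheory.Measure.addHaar_image_linearMap]
  calc _ ≤ MeasureTheory.volume (Metric.closedBall (0:ℂ) M) := by
        apply MeasureTheory.measure_mono
        rintro _ ⟨_, ⟨z, hz, rfl⟩, rfl⟩
        rw [mem_closedBall_zero_iff]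
        simpa using hb z hz.1 hz.2
    _ = _ := by
        rw [Complex.volume_closedBall, mul_comm Real.pi, ENNReal.ofReal_mul (by positivity), ENNReal.ofReal_pow hM]
        congr 1
        rw [← NNReal.coe_real_pi, ENNReal.ofReal_coe_nnreal]

theorem aux_real_bound {r s B K : ℝ} (hr : 0 < r) (hrs : r < s) (hs : s < 1) (hB : 0 ≤ B) (hK : 0 ≤ K)
    (h : (2 * B + 4 * K) * r ≤ 1) :
    1 / s + B * (s - r ^ 2 / s) + 2 * K * s ^ 2 ≤ 1 / r + 2 * K * r ^ 2 := by
  have hs0 : 0 < s := hr.trans hrs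
  have h1 : (2 * B + 4 * K) * (s - r) ≤ 1 / r - 1 / s := by
    have e : 1 / r - 1 / s = (s - r) * (1 / (r * s)) := by field_simp
    rw [e, mul_comm]
    apply mul_le_mul_of_nonneg_left _ (by linarith)
    rw [le_div_iff₀ (by positivity)]
    nlinarith [mul_nonneg (add_nonneg (mul_nonneg zero_le_two hB) (mul_nonneg zero_le_four hK)) hr.le]
  have h2 : B * (s - r ^ 2 / s) ≤ 2 * B * (s - r) := by
    have : s - r ^ 2 / s ≤ 2 * (s - r) := by
      rw [← sub_nonneg]
      have e : 2 * (s - r) - (s - r ^ 2 / s) = (s - r) ^ 2 / s := by field_simp; ring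
      rw [e]; positivity
    nlinarith
  have h3 : 2 * K * s ^ 2 - 2 * K * r ^ 2 ≤ 4 * K * (s - r) := by
    have : s ^ 2 - r ^ 2 ≤ 2 * (s - r) := by nlinarith
    nlinarith
  linarith

theorem aux_area {q : ℂ → ℂ} (hq : DifferentiableOn ℂ q (Metric.ball 0 1)) (hq0 : q 0 = 1)
    (hinj : Set.InjOn (fun z => q (z ^ 2) / z) (Metric.ball 0 1 \ {0})) : ‖deriv q 0‖ ≤ 1 := by
  set b := deriv q 0 with hbdef
  set B := ‖b‖ with hB
  have hB0 : 0 ≤ B := norm_nonneg _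
  have hnb : Metric.ball (0 : ℂ) 1 ∈ nhds 0 := Metric.ball_mem_nhds _ one_pos
  have hm1 : DifferentiableOn ℂ (dslope q 0) (Metric.ball 0 1) :=
    (Complex.differentiableOn_dslope hnb).2 hq
  set m := dslope (dslope q 0) 0 with hmdef
  have hm : DifferentiableOn ℂ m (Metric.ball 0 1) :=
    (Complex.differentiableOn_dslope hnb).2 hm1
  have hexp : ∀ z : ℂ, z ≠ 0 → q (z ^ 2) / z = 1 / z + b * z + z ^ 3 * m (z ^ 2) := by
    intro z hz
    have hz2 := pow_ne_zero 2 hz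
    rw [hmdef, dslope_of_ne _ hz2, slope_def_field, dslope_of_ne _ hz2, slope_def_field, dslope_same, hq0]
    field_simp
    ring
  have key : ∀ ρ : ℝ, 0 < ρ → ρ < 1 → B ^ 2 * ρ ^ 2 - 1 / ρ ^ 2 ≤ 0 := by
    intro ρ hρ0 hρ
    obtain ⟨K, hK⟩ := (isCompact_closedBall (0:ℂ) ρ).exists_bound_of_continuousOn
      (hm.continuousOn.mono (Metric.closedBall_subset_ball hρ))
    have hK0 : 0 ≤ K := (norm_nonneg _).trans (hK 0 (by simp [hρ0.le]))
    set D := B ^ 2 * ρ ^ 2 - 1 / ρ ^ 2 with hD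
    have hsmall : ∀ r : ℝ, 0 < r → r < ρ → (2 * B + 4 * K) * r ≤ 1 →
        D ≤ 2 * B ^ 2 * r ^ 2 + B ^ 2 * r ^ 4 * D - B ^ 4 * r ^ 6 + 4 * K * r + 4 * K ^ 2 * r ^ 4 := by
      intro r hr hrρ hr1
      have hBr : B * r ≤ 1 := by nlinarith [mul_nonneg hB0 hr.le, mul_nonneg hK0 hr.le]
      have hBr2 : B * r ^ 2 ≤ 1 := by nlinarith [mul_nonneg hB0 hr.le]
      have hc : ‖b * (r:ℂ) ^ 2‖ = B * r ^ 2 := by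
        rw [norm_mul, norm_pow, Complex.norm_real, Real.norm_eq_abs, sq_abs]
      have hup := aux_area_upper hq hinj (b * (r:ℂ) ^ 2) hr hρ (M := 1 / r + 2 * K * r ^ 2) (by positivity) (by
        intro z h1 h2
        have hs0 : 0 < ‖z‖ := hr.trans h1
        have hz : z ≠ 0 := norm_pos_iff.1 hs0
        have hs1 : ‖z‖ < 1 := h2.trans hρ
        refine le_trans ?_ (aux_real_bound hr h1 hs1 hB0 hK0 hr1)
        set s := ‖z‖ with hs
        have hzz : starRingEnd ℂ z * z = (s:ℂ) ^ 2 := by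
          rw [mul_comm, Complex.mul_conj, Complex.normSq_eq_norm_sq]; push_cast; rfl
        have hcz : starRingEnd ℂ z ≠ 0 := by simpa using hz
        have hsC : (s:ℂ) ≠ 0 := by exact_mod_cast hs0.ne'
        have hcinv : starRingEnd ℂ z = (s:ℂ) ^ 2 / z := by rw [← hzz]; field_simp
        have hbb : b * starRingEnd ℂ b = ((B ^ 2 : ℝ) : ℂ) := by
          rw [Complex.mul_conj, Complex.normSq_eq_norm_sq]
        have e : q (z ^ 2) / z - b * (r:ℂ) ^ 2 * starRingEnd ℂ (q (z ^ 2) / z) =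
            ((1 - B ^ 2 * r ^ 2 * s ^ 2 : ℝ) : ℂ) / z + b * (z * ((1 - r ^ 2 / s ^ 2 : ℝ) : ℂ))
             + (z ^ 3 * m (z ^ 2) - b * (r:ℂ) ^ 2 * starRingEnd ℂ (z ^ 3 * m (z ^ 2))) := by
          rw [hexp z hz, map_add, map_add, map_div₀, map_mul, map_one, hcinv]
          have : ((1 - B ^ 2 * r ^ 2 * s ^ 2 : ℝ) : ℂ) = 1 - (b * starRingEnd ℂ b) * r ^ 2 * s ^ 2 := by
            rw [hbb]; push_cast; rfl
          rw [this]
          push_cast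
          field_simp
          ring
        rw [e]
        have hms : ‖z ^ 3 * m (z ^ 2)‖ ≤ K * s ^ 2 := by
          have hmK : ‖m (z ^ 2)‖ ≤ K := by
            apply hK
            rw [mem_closedBall_zero_iff, norm_pow]
            nlinarith
          rw [norm_mul, norm_pow]
          calc s ^ 3 * ‖m (z ^ 2)‖ ≤ s ^ 3 * K := by gcongr
            _ ≤ s ^ 2 * K := by
              apply mul_le_mul_of_nonneg_right _ hK0
              exact pow_le_pow_of_le_one hs0.le hs1.le (by norm_num)
            _ = _ := mul_comm _ _
        have t1 : ‖((1 - B ^ 2 * r ^ 2 * s ^ 2 : ℝ) : ℂ) / z‖ ≤ 1 / s := by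
          rw [norm_div, Complex.norm_real, Real.norm_eq_abs]
          apply div_le_div_of_nonneg_right _ hs0.le
          have : (B * r) ^ 2 * s ^ 2 ≤ 1 := mul_le_one₀ (pow_le_one₀ (by positivity) hBr) (by positivity) (pow_le_one₀ hs0.le hs1.le)
          rw [abs_le]
          constructor
          · nlinarith
          · have : 0 ≤ B ^ 2 * r ^ 2 * s ^ 2 := by positivity
            linarith
        have t2 : ‖b * (z * ((1 - r ^ 2 / s ^ 2 : ℝ) : ℂ))‖ = B * (s - r ^ 2 / s) := by
          rw [norm_mul, norm_mul, Complex.norm_real, Real.norm_eq_abs, abs_of_nonneg]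
          · rw [← hs]; field_simp; exact mul_comm _ _
          · rw [sub_nonneg, div_le_one (by positivity)]
            exact pow_le_pow_left₀ hr.le h1.le 2
        have t3 : ‖z ^ 3 * m (z ^ 2) - b * (r:ℂ) ^ 2 * starRingEnd ℂ (z ^ 3 * m (z ^ 2))‖ ≤ 2 * K * s ^ 2 := by
          refine (norm_sub_le _ _).trans ?_
          rw [norm_mul (b * (r:ℂ) ^ 2), hc, Complex.norm_conj]
          nlinarith [norm_nonneg (z ^ 3 * m (z ^ 2))]
        refine (norm_add₃_le).trans ?_
        rw [t2]
        linarith)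
      have hlow := aux_area_lower hq hq0 hr hrρ hρ
      have h1 := (mul_le_mul_right hlow (ENNReal.ofReal |1 - ‖b * (r:ℂ) ^ 2‖ ^ 2|)).trans hup
      rw [← ENNReal.ofReal_mul (abs_nonneg _), ENNReal.ofReal_le_ofReal_iff (by positivity), hc] at h1
      have hab : |1 - (B * r ^ 2) ^ 2| = 1 - (B * r ^ 2) ^ 2 := by
        apply abs_of_nonneg
        have : (B * r ^ 2) ^ 2 ≤ 1 := pow_le_one₀ (by positivity) hBr2
        linarith
      rw [hab] at h1
      have h2 : (1 - (B * r ^ 2) ^ 2) * (1 / r ^ 2 - 1 / ρ ^ 2 + B ^ 2 * (ρ ^ 2 - r ^ 2)) ≤ (1 / r + 2 * K * r ^ 2) ^ 2 := by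
        apply le_of_mul_le_mul_left _ Real.pi_pos
        linarith
      have e1 : (1 - (B * r ^ 2) ^ 2) * (1 / r ^ 2 - 1 / ρ ^ 2 + B ^ 2 * (ρ ^ 2 - r ^ 2)) =
          1 / r ^ 2 + D - 2 * B ^ 2 * r ^ 2 - B ^ 2 * r ^ 4 * D + B ^ 4 * r ^ 6 := by
        rw [hD]; field_simp; ring
      have e2 : (1 / r + 2 * K * r ^ 2) ^ 2 = 1 / r ^ 2 + 4 * K * r + 4 * K ^ 2 * r ^ 4 := by
        field_simp; ring
      rw [e1, e2] at h2
      linarith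
    have hlim : Filter.Tendsto (fun r : ℝ => 2 * B ^ 2 * r ^ 2 + B ^ 2 * r ^ 4 * D - B ^ 4 * r ^ 6 + 4 * K * r + 4 * K ^ 2 * r ^ 4)
        (nhdsWithin 0 (Set.Ioi 0)) (nhds 0) := by
      have hc : Continuous (fun r : ℝ => 2 * B ^ 2 * r ^ 2 + B ^ 2 * r ^ 4 * D - B ^ 4 * r ^ 6 + 4 * K * r + 4 * K ^ 2 * r ^ 4) := by
        fun_prop
      have := (hc.tendsto 0).mono_left (nhdsWithin_le_nhds (s := Set.Ioi 0))
      simpa using this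
    apply ge_of_tendsto hlim
    have hev : ∀ᶠ r : ℝ in nhdsWithin 0 (Set.Ioi 0), (2 * B + 4 * K) * r < 1 := by
      have hc : Continuous (fun r : ℝ => (2 * B + 4 * K) * r) := by fun_prop
      have := (hc.tendsto 0).mono_left (nhdsWithin_le_nhds (s := Set.Ioi 0))
      exact this.eventually_lt_const (by simp)
    filter_upwards [hev, Ioo_mem_nhdsGT hρ0] with r h1 h2
    exact hsmall r h2.1 h2.2 h1.le
  have hlim : Filter.Tendsto (fun ρ : ℝ => B ^ 2 * ρ ^ 2 - 1 / ρ ^ 2) (nhdsWithin 1 (Set.Iio 1)) (nhds (B ^ 2 - 1)) := by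
    have hc : ContinuousAt (fun ρ : ℝ => B ^ 2 * ρ ^ 2 - 1 / ρ ^ 2) 1 := by
      have : (1:ℝ) ^ 2 ≠ 0 := by norm_num
      fun_prop (disch := assumption)
    have := hc.tendsto.mono_left (nhdsWithin_le_nhds (s := Set.Iio 1))
    simpa using this
  have hfin : B ^ 2 - 1 ≤ 0 := by
    apply le_of_tendsto hlim
    filter_upwards [Ioo_mem_nhdsLT (zero_lt_one' ℝ)] with ρ h
    exact key ρ h.1 h.2
  nlinarith

theorem aux_bieberbach {f : ℂ → ℂ} (hf : DifferentiableOn ℂ f (Metric.ball 0 1))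
    (hinj : Set.InjOn f (Metric.ball 0 1)) : ‖deriv (deriv f) 0‖ ≤ 4 * ‖deriv f 0‖ := by
  have hnb : Metric.ball (0 : ℂ) 1 ∈ nhds 0 := Metric.ball_mem_nhds _ one_pos
  have h0 : (0:ℂ) ∈ Metric.ball (0:ℂ) 1 := mem_of_mem_nhds hnb
  have ha : deriv f 0 ≠ 0 := aux_deriv_ne_zero hnb (hf.analyticAt hnb) hinj
  set a := deriv f 0 with hadef
  set p := dslope f 0 with hpdef
  have hp : DifferentiableOn ℂ p (Metric.ball 0 1) := (Complex.differentiableOn_dslope hnb).2 hf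
  have hp0 : p 0 = a := dslope_same _ _
  have hfp : ∀ z, f z = f 0 + z * p z := by
    intro z
    have := sub_smul_dslope f 0 z
    simp only [sub_zero, smul_eq_mul] at this
    rw [hpdef, this]; ring
  have hpne : ∀ z ∈ Metric.ball (0:ℂ) 1, p z ≠ 0 := by
    intro z hz hpz
    by_cases hz0 : z = 0
    · rw [hz0, hp0] at hpz; exact ha hpz
    · apply hz0
      apply hinj hz h0
      rw [hfp z, hpz]; ring
  have hp' : DifferentiableOn ℂ (deriv p) (Metric.ball 0 1) := hp.deriv Metric.isOpen_ball
  have hpd : ∀ z ∈ Metric.ball (0:ℂ) 1, HasDerivAt p (deriv p z) z := fun z hz =>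
    (hp.differentiableAt (Metric.isOpen_ball.mem_nhds hz)).hasDerivAt
  have hf2 : deriv (deriv f) 0 = 2 * deriv p 0 := by
    have e : deriv f =ᶠ[nhds 0] fun z => p z + z * deriv p z := by
      filter_upwards [hnb] with z hz
      have h1 := ((hasDerivAt_id z).mul (hpd z hz)).const_add (f 0)
      have h2 : HasDerivAt f (1 * p z + id z * deriv p z) z :=
        h1.congr_of_eventuallyEq (.of_forall fun w => hfp w)
      rw [h2.deriv]; simp
    rw [e.deriv_eq]
    have h1 := (hpd 0 h0).add ((hasDerivAt_id (0:ℂ)).mul (hp'.differentiableAt hnb).hasDerivAt)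
    have h2 := h1.deriv
    have h3 : deriv (fun z => p z + z * deriv p z) 0 = deriv p 0 + (1 * deriv p 0 + id 0 * deriv (deriv p) 0) := h2
    rw [h3]; simp; ring
  obtain ⟨L, hL0, hL⟩ := (hp'.div hp hpne).isExactOn_ball.with_val_at 0 0
  have hLd : ∀ z ∈ Metric.ball (0:ℂ) 1, HasDerivAt L (deriv p z / p z) z := fun z hz => hL z hz
  set q : ℂ → ℂ := fun z => Complex.exp (-(L z / 2)) with hqdef
  have hqd : ∀ z ∈ Metric.ball (0:ℂ) 1, HasDerivAt q (q z * -((deriv p z / p z) / 2)) z := fun z hz =>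
    (((hLd z hz).div_const 2).neg).cexp
  have hq : DifferentiableOn ℂ q (Metric.ball 0 1) := fun z hz => (hqd z hz).differentiableAt.differentiableWithinAt
  have hq0 : q 0 = 1 := by simp [hqdef, hL0]
  have hqne : ∀ z, q z ≠ 0 := fun z => Complex.exp_ne_zero _
  have hqp : ∀ z ∈ Metric.ball (0:ℂ) 1, q z ^ 2 * p z = a := by
    intro z hz
    have hd : ∀ z ∈ Metric.ball (0:ℂ) 1, HasDerivAt (fun z => q z ^ 2 * p z) 0 z := by
      intro z hz
      have h1 := ((hqd z hz).pow 2).mul (hpd z hz)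
      refine (h1.congr_deriv ?_).congr_of_eventuallyEq (.of_forall fun y => rfl)
      have := hpne z hz
      simp only [Pi.pow_apply]
      field_simp
      ring
    have := Metric.isOpen_ball.is_const_of_deriv_eq_zero (𝕜 := ℂ) (f := fun z => q z ^ 2 * p z)
      (convex_ball (0:ℂ) 1).isPreconnected
      (fun z hz => (hd z hz).differentiableAt.differentiableWithinAt)
      (fun z hz => (hd z hz).deriv) hz h0
    simpa [hq0, hp0] using this
  have hsq : ∀ z ∈ Metric.ball (0:ℂ) 1, z ^ 2 ∈ Metric.ball (0:ℂ) 1 := by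
    intro z hz
    rw [mem_ball_zero_iff] at *
    rw [norm_pow]
    exact pow_lt_one₀ (norm_nonneg _) hz two_ne_zero
  have hA := aux_area hq hq0 (by
    rintro z ⟨hz, hz0⟩ w ⟨hw, hw0⟩ hzw
    have hz0' : z ≠ 0 := hz0
    have hw0' : w ≠ 0 := hw0
    simp only at hzw
    have e1 := hqp _ (hsq z hz)
    have e2 := hqp _ (hsq w hw)
    have hff : f (z ^ 2) = f (w ^ 2) := by
      have h3 : q (z ^ 2) ^ 2 * w ^ 2 = q (w ^ 2) ^ 2 * z ^ 2 := by
        rw [div_eq_div_iff hz0' hw0'] at hzw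
        linear_combination (q (z ^ 2) * w + q (w ^ 2) * z) * hzw
      rw [hfp (z ^ 2), hfp (w ^ 2)]
      congr 1
      have hne := mul_ne_zero (pow_ne_zero 2 (hqne (z ^ 2))) (pow_ne_zero 2 (hqne (w ^ 2)))
      apply mul_left_cancel₀ hne
      linear_combination q (w ^ 2) ^ 2 * z ^ 2 * e1 - q (z ^ 2) ^ 2 * w ^ 2 * e2 - a * h3
    have h4 := hinj (hsq z hz) (hsq w hw) hff
    rcases sq_eq_sq_iff_eq_or_eq_neg.1 h4 with h | h
    · exact h
    · exfalso
      rw [h4, h, div_eq_div_iff (neg_ne_zero.2 hw0') hw0'] at hzw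
      have : q (w ^ 2) * w * 2 = 0 := by linear_combination hzw
      simp [hqne, hw0'] at this)
  rw [(hqd 0 h0).deriv, hq0, hp0, one_mul, norm_neg, norm_div, norm_div] at hA
  rw [hf2, norm_mul]
  have ha' : 0 < ‖a‖ := norm_pos_iff.2 ha
  simp only [Complex.norm_ofNat] at *
  rw [div_div, div_le_one (by positivity)] at hA
  linarith

theorem aux_second {φ : ℂ → ℂ} (hdiff : DifferentiableOn ℂ φ {z : ℂ | 0 < z.re})
    (hinj : Set.InjOn φ {z : ℂ | 0 < z.re}) {t : ℝ} (ht : 0 < t) :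
    ‖(t:ℂ) * deriv (deriv φ) t + deriv φ t‖ ≤ 2 * ‖deriv φ t‖ := by
  have hHo : IsOpen {z : ℂ | 0 < z.re} := isOpen_lt continuous_const Complex.continuous_re
  have htH : (t:ℂ) ∈ {z : ℂ | 0 < z.re} := by simpa using ht
  have hd2 : DifferentiableOn ℂ (deriv φ) {z : ℂ | 0 < z.re} := hdiff.deriv hHo
  have htC : (t:ℂ) ≠ 0 := by exact_mod_cast ht.ne'
  set μ : ℂ → ℂ := fun z => t * ((1 + z) / (1 - z)) with hμ
  have hne : ∀ z ∈ Metric.ball (0:ℂ) 1, 1 - z ≠ 0 := by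
    intro z hz h
    rw [mem_ball_zero_iff, ← sub_eq_zero.1 h] at hz
    simp at hz
  have hmaps : ∀ z ∈ Metric.ball (0:ℂ) 1, μ z ∈ {z : ℂ | 0 < z.re} := by
    intro z hz
    have h1 := hne z hz
    have h2 : 0 < Complex.normSq (1 - z) := Complex.normSq_pos.2 h1
    rw [mem_ball_zero_iff] at hz
    have h3 : Complex.normSq z < 1 := by
      rw [Complex.normSq_eq_norm_sq]; exact pow_lt_one₀ (norm_nonneg _) hz two_ne_zero
    change 0 < (μ z).re
    have e : (μ z).re = t * ((1 - Complex.normSq z) / Complex.normSq (1 - z)) := by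
      simp only [hμ, Complex.re_ofReal_mul, Complex.div_re]
      rw [← add_div]
      congr 2
      simp [Complex.normSq_apply]; ring
    rw [e]
    exact mul_pos ht (div_pos (by linarith) h2)
  have hμd : ∀ z ∈ Metric.ball (0:ℂ) 1, HasDerivAt μ (2 * t / (1 - z) ^ 2) z := by
    intro z hz
    have h1 := hne z hz
    have h2 := (((hasDerivAt_id z).const_add 1).div ((hasDerivAt_id z).const_sub 1) h1).const_mul (t:ℂ)
    refine (h2.congr_deriv ?_).congr_of_eventuallyEq (.of_forall fun y => rfl)
    simp only [id]
    field_simp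
    ring
  have hfd : ∀ z ∈ Metric.ball (0:ℂ) 1, HasDerivAt (fun z => φ (μ z)) (deriv φ (μ z) * (2 * t / (1 - z) ^ 2)) z := by
    intro z hz
    exact HasDerivAt.comp z (hdiff.differentiableAt (hHo.mem_nhds (hmaps z hz))).hasDerivAt (hμd z hz)
  have h0 : (0:ℂ) ∈ Metric.ball (0:ℂ) 1 := by simp
  have hμ0 : μ 0 = t := by simp [hμ]
  have hB := aux_bieberbach (f := fun z => φ (μ z))
    (fun z hz => (hfd z hz).differentiableAt.differentiableWithinAt) (by
      intro z hz w hw h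
      have h1 := hinj (hmaps z hz) (hmaps w hw) h
      have h2 := mul_left_cancel₀ htC h1
      rw [div_eq_div_iff (hne z hz) (hne w hw)] at h2
      linear_combination h2 / 2)
  have e1 : deriv (fun z => φ (μ z)) 0 = 2 * (t * deriv φ t) := by
    rw [(hfd 0 h0).deriv, hμ0]; simp; ring
  have e2 : deriv (deriv (fun z => φ (μ z))) 0 = 4 * t * (t * deriv (deriv φ) t + deriv φ t) := by
    have ev : deriv (fun z => φ (μ z)) =ᶠ[nhds 0] fun z => deriv φ (μ z) * (2 * t / (1 - z) ^ 2) := by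
      filter_upwards [Metric.ball_mem_nhds (0:ℂ) one_pos] with z hz
      exact (hfd z hz).deriv
    rw [ev.deriv_eq]
    have hpt : HasDerivAt (deriv φ) (deriv (deriv φ) (μ 0)) (μ 0) := by
      rw [hμ0]; exact (hd2.differentiableAt (hHo.mem_nhds htH)).hasDerivAt
    have k1 : HasDerivAt (fun z => deriv φ (μ z)) (deriv (deriv φ) (μ 0) * (2 * t / (1 - 0) ^ 2)) 0 :=
      HasDerivAt.comp 0 hpt (hμd 0 h0)
    have k2 : HasDerivAt (fun z : ℂ => 2 * (t:ℂ) / (1 - z) ^ 2) (4 * (t:ℂ)) 0 := by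
      have h2 := (hasDerivAt_const (0:ℂ) (2 * (t:ℂ))).div (((hasDerivAt_id (0:ℂ)).const_sub 1).pow 2) (by simp)
      refine (h2.congr_deriv ?_).congr_of_eventuallyEq (.of_forall fun y => rfl)
      simp; ring
    have k3 := (k1.mul k2).deriv
    have k4 : deriv (fun z : ℂ => deriv φ (μ z) * (2 * (t:ℂ) / (1 - z) ^ 2)) 0 =
        deriv (deriv φ) (μ 0) * (2 * (t:ℂ) / (1 - 0) ^ 2) * (2 * (t:ℂ) / (1 - 0) ^ 2)
          + deriv φ (μ 0) * (4 * (t:ℂ)) := k3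
    rw [k4, hμ0]; simp; ring
  rw [e1, e2, norm_mul, norm_mul, norm_mul, norm_mul, Complex.norm_real, Real.norm_eq_abs, abs_of_pos ht] at hB
  simp only [Complex.norm_ofNat] at hB
  apply le_of_mul_le_mul_left _ (show 0 < 4 * t by positivity)
  linarith

theorem aux_distortion {φ : ℂ → ℂ} (hdiff : DifferentiableOn ℂ φ {z : ℂ | 0 < z.re})
    (hinj : Set.InjOn φ {z : ℂ | 0 < z.re}) {T : ℝ} (hT : 1 ≤ T) :
    ‖deriv φ T‖ ≤ T * ‖deriv φ 1‖ := by
  have hHo : IsOpen {z : ℂ | 0 < z.re} := isOpen_lt continuous_const Complex.continuous_re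
  have hd2 : DifferentiableOn ℂ (deriv φ) {z : ℂ | 0 < z.re} := hdiff.deriv hHo
  set ψ : ℝ → ℂ := fun t => t * deriv φ t with hψ
  have hψd : ∀ t : ℝ, 0 < t → HasDerivAt ψ ((t:ℂ) * deriv (deriv φ) t + deriv φ t) t := by
    intro t ht
    have htH : (t:ℂ) ∈ {z : ℂ | 0 < z.re} := by simpa using ht
    have h1 := (hd2.differentiableAt (hHo.mem_nhds htH)).hasDerivAt
    have h2 := ((hasDerivAt_id (t:ℂ)).mul h1).comp_ofReal
    have h3 := h2.congr_deriv (g' := (t:ℂ) * deriv (deriv φ) t + deriv φ t) (by simp; ring)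
    exact h3
  set N : ℝ → ℝ := fun t => ‖ψ t‖ ^ 2 / t ^ 4 with hN
  have hNd : ∀ t : ℝ, 0 < t → HasDerivAt N
      ((2 * inner ℝ (ψ t) ((t:ℂ) * deriv (deriv φ) t + deriv φ t) * t ^ 4 - ‖ψ t‖ ^ 2 * (4 * t ^ 3)) / (t ^ 4) ^ 2) t := by
    intro t ht
    have h2 := (hψd t ht).norm_sq.div (hasDerivAt_pow 4 t) (by positivity)
    refine (h2.congr_deriv ?_).congr_of_eventuallyEq (.of_forall fun y => rfl)
    norm_num
  have hanti : AntitoneOn N (Set.Icc 1 T) := by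
    apply antitoneOn_of_deriv_nonpos (convex_Icc 1 T)
    · intro t ht
      exact (hNd t (by linarith [ht.1])).continuousAt.continuousWithinAt
    · intro t ht
      rw [interior_Icc] at ht
      exact (hNd t (by linarith [ht.1])).differentiableAt.differentiableWithinAt
    · intro t ht
      rw [interior_Icc] at ht
      have ht0 : 0 < t := by linarith [ht.1]
      rw [(hNd t ht0).deriv]
      apply div_nonpos_of_nonpos_of_nonneg _ (by positivity)
      have h1 := aux_second hdiff hinj ht0
      set v := (t:ℂ) * deriv (deriv φ) t + deriv φ t with hv
      have h2 : inner ℝ (ψ t) v ≤ ‖ψ t‖ * ‖v‖ := real_inner_le_norm _ _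
      have h3 : ‖ψ t‖ = t * ‖deriv φ t‖ := by
        simp only [hψ]; rw [norm_mul, Complex.norm_real, Real.norm_eq_abs, abs_of_pos ht0]
      have h4 : t * inner ℝ (ψ t) v ≤ 2 * ‖ψ t‖ ^ 2 := by
        calc t * inner ℝ (ψ t) v ≤ t * (‖ψ t‖ * ‖v‖) := by gcongr
          _ ≤ t * (‖ψ t‖ * (2 * ‖deriv φ t‖)) := by gcongr
          _ = 2 * ‖ψ t‖ ^ 2 := by rw [h3]; ring
      have h5 : 0 < t ^ 3 := by positivity
      nlinarith
  have h1 := hanti (Set.left_mem_Icc.2 hT) (Set.right_mem_Icc.2 hT) hT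
  have hT0 : 0 < T := by linarith
  simp only [hN, hψ, norm_mul, Complex.norm_real, Real.norm_eq_abs, abs_of_pos hT0] at h1
  simp only [abs_one, one_mul, one_pow, div_one, Complex.ofReal_one] at h1
  rw [div_le_iff₀ (by positivity)] at h1
  have h2 : ‖deriv φ T‖ ^ 2 ≤ (T * ‖deriv φ 1‖) ^ 2 := by
    apply le_of_mul_le_mul_left _ (show 0 < T ^ 2 by positivity)
    linarith
  exact le_of_sq_le_sq h2 (by positivity)

/-- First part of Lemma 5.1 of the paper: the quantitative growth estimate
`|φ(log R)| ≤ |φ(1)| + 16 H |φ'(1)| (log R)²`. -/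
theorem growth_at_logR (φ : ℂ → ℂ) (H α : ℝ)
    (hH : 0 < H) (hα : 0 < α) (hα1 : α ≤ 1)
    (hdiff : DifferentiableOn ℂ φ {z : ℂ | 0 < z.re})
    (hinj : Set.InjOn φ {z : ℂ | 0 < z.re})
    (hHol : ∀ T : ℝ, 1 ≤ T → ∀ w₁ ∈ Qsq 1, ∀ w₂ ∈ Qsq 1,
      ‖φ ((T : ℂ) * w₁) - φ ((T : ℂ) * w₂)‖
        ≤ H * T * ‖deriv φ (T : ℂ)‖ * ‖w₁ - w₂‖ ^ α) :
    ∀ R : ℝ, Real.exp 1 ≤ R →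
      ‖φ ((Real.log R : ℝ) : ℂ)‖ ≤ ‖φ 1‖ + 16 * H * ‖deriv φ 1‖ * (Real.log R) ^ 2 := by
  intro R hR
  have hT : 1 ≤ Real.log R := by
    rw [Real.le_log_iff_exp_le ((Real.exp_pos 1).trans_le hR)]; exact hR
  set T := Real.log R with hTdef
  have hT0 : 0 < T := by linarith
  have hTC : (T:ℂ) ≠ 0 := by exact_mod_cast hT0.ne'
  have hi1 : T⁻¹ ≤ 1 := inv_le_one_of_one_le₀ hT
  have hi0 : 0 < T⁻¹ := inv_pos.2 hT0
  have h1 := hHol T hT 1 (by simp [Qsq]) ((T⁻¹ : ℝ) : ℂ) (by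
    simp only [Qsq, Set.mem_ofPred_eq, Complex.ofReal_re, Complex.ofReal_im]
    refine ⟨hi0, by linarith, by norm_num, by norm_num⟩)
  rw [mul_one, Complex.ofReal_inv, mul_inv_cancel₀ hTC] at h1
  have h2 : ‖(1:ℂ) - (T:ℂ)⁻¹‖ ^ α ≤ 1 := by
    apply Real.rpow_le_one (norm_nonneg _) _ hα.le
    rw [← Complex.ofReal_inv, ← Complex.ofReal_one, ← Complex.ofReal_sub, Complex.norm_real,
      Real.norm_eq_abs, abs_of_nonneg (by linarith)]
    linarith
  have h3 := aux_distortion hdiff hinj hT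
  have h4 : ‖φ T - φ 1‖ ≤ H * ‖deriv φ 1‖ * T ^ 2 := by
    calc _ ≤ H * T * ‖deriv φ (T : ℂ)‖ * ‖(1:ℂ) - (T:ℂ)⁻¹‖ ^ α := h1
      _ ≤ H * T * (T * ‖deriv φ 1‖) * 1 := by gcongr
      _ = _ := by ring
  have h5 : ‖φ T‖ ≤ ‖φ 1‖ + ‖φ T - φ 1‖ := by
    have := norm_add_le (φ 1) (φ T - φ 1)
    simpa using this
  have h6 : 0 ≤ H * ‖deriv φ 1‖ * T ^ 2 := by positivity
  linarith
end
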